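/- Let M be a model of PA⁻ + IΣ₁ and let U be an M-ultrafilter on a positive a ∈ M. Then there exist a structure N in the language of arithmetic and an element c ∈ N such that M is a cofinal substructure of N, N = {f(c) : f ∈ M and M ⊨ 'f is a function with domain [0,a)'} (where f(c) denotes the value at c of the function coded by f, computed in N), and the map sending [f]_U to f(c) is an isomorphism from Ult_U(M) onto N. -/

import Mathlib

/- Shared development: first-order arithmetic in the language {0,1,+,·,<},
   the arithmetic hierarchy, fragments of arithmetic, and coded finite
   combinatorics inside models. -/

open FirstOrder Language

namespace ArithFC

/-- Function symbols of the language of arithmetic: 0, 1, +, ·. -/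
inductive Func : ℕ → Type
  | zero : Func 0
  | one : Func 0
  | add : Func 2
  | mul : Func 2

/-- Relation symbols of the language of arithmetic: <. -/
inductive Rel : ℕ → Type
  | lt : Rel 2

/-- The first-order language {0, 1, +, ·, <}. -/
def lang : Language :=
  { Functions := Func, Relations := Rel }

section Instances

variable (M : Type) [lang.Structure M]

instance : Zero M := ⟨Structure.funMap (L := lang) Func.zero ![]⟩
instance : One M := ⟨Structure.funMap (L := lang) Func.one ![]⟩
instance : Add M := ⟨fun x y => Structure.funMap (L := lang) Func.add ![x, y]⟩
instance : Mul M := ⟨fun x y => Structure.funMap (L := lang) Func.mul ![x, y]⟩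
instance : LT M := ⟨fun x y => Structure.RelMap (L := lang) Rel.lt ![x, y]⟩
instance : LE M := ⟨fun x y => x < y ∨ x = y⟩

end Instances

/-- The numeral `n` in a model. -/
def numM (M : Type) [lang.Structure M] : ℕ → M
  | 0 => 0
  | n + 1 => numM M n + 1

/-- `b` is nonstandard (greater than every numeral). -/
def Nonstd {M : Type} [lang.Structure M] (b : M) : Prop := ∀ n : ℕ, numM M n < b

/-- The atomic formula `t < u`. -/
def ltFm {α : Type} {n : ℕ} (t u : lang.Term (α ⊕ Fin n)) : lang.BoundedFormula α n :=
  BoundedFormula.rel (Rel.lt : lang.Relations 2) ![t, u]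

/-- Δ₀ formulas: built from atomic formulas by boolean connectives and
bounded universal quantification (this generates, up to logical equivalence,
the usual class of bounded formulas). -/
inductive IsDelta0 {α : Type} : ∀ n : ℕ, lang.BoundedFormula α n → Prop
  | falsum (n : ℕ) : IsDelta0 n BoundedFormula.falsum
  | equal (n : ℕ) (t u : lang.Term (α ⊕ Fin n)) : IsDelta0 n (BoundedFormula.equal t u)
  | rel (n l : ℕ) (R : lang.Relations l) (ts : Fin l → lang.Term (α ⊕ Fin n)) :
      IsDelta0 n (BoundedFormula.rel R ts)
  | imp (n : ℕ) {φ ψ : lang.BoundedFormula α n} :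
      IsDelta0 n φ → IsDelta0 n ψ → IsDelta0 n (φ.imp ψ)
  | bdAll (n : ℕ) (t : lang.Term (α ⊕ Fin n)) {φ : lang.BoundedFormula α (n + 1)} :
      IsDelta0 (n + 1) φ →
      IsDelta0 n
        (BoundedFormula.all ((ltFm (Term.var (Sum.inr (Fin.last n))) (t.liftAt 1 n)).imp φ))

mutual
  /-- Σ_m formulas. -/
  inductive SigmaFm {α : Type} : ℕ → ∀ n : ℕ, lang.BoundedFormula α n → Prop
    | delta0 (m n : ℕ) {φ : lang.BoundedFormula α n} : IsDelta0 n φ → SigmaFm m n φ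
    | ofPi (m n : ℕ) {φ : lang.BoundedFormula α n} : PiFm m n φ → SigmaFm (m + 1) n φ
    | ex (m n : ℕ) {φ : lang.BoundedFormula α (n + 1)} :
        SigmaFm (m + 1) (n + 1) φ → SigmaFm (m + 1) n φ.ex
  /-- Π_m formulas. -/
  inductive PiFm {α : Type} : ℕ → ∀ n : ℕ, lang.BoundedFormula α n → Prop
    | delta0 (m n : ℕ) {φ : lang.BoundedFormula α n} : IsDelta0 n φ → PiFm m n φ
    | ofSigma (m n : ℕ) {φ : lang.BoundedFormula α n} : SigmaFm m n φ → PiFm (m + 1) n φ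
    | all (m n : ℕ) {φ : lang.BoundedFormula α (n + 1)} :
        PiFm (m + 1) (n + 1) φ → PiFm (m + 1) n φ.all
end

/-- A `k`-ary relation on `M` is Σ_m-definable (with parameters from `M`). -/
def IsSigmaDef (m : ℕ) (M : Type) [lang.Structure M] {k : ℕ} (R : (Fin k → M) → Prop) : Prop :=
  ∃ (p : ℕ) (φ : lang.BoundedFormula (Fin k ⊕ Fin p) 0) (w : Fin p → M),
    SigmaFm m 0 φ ∧ ∀ v : Fin k → M, R v ↔ φ.Realize (Sum.elim v w) finZeroElim

/-- A subset of `M` is Σ_m-definable with parameters. -/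
def SigmaDef1 (m : ℕ) (M : Type) [lang.Structure M] (A : Set M) : Prop :=
  IsSigmaDef m M (k := 1) fun v => v 0 ∈ A

/-- A binary relation on `M` is Σ_m-definable with parameters. -/
def SigmaDef2 (m : ℕ) (M : Type) [lang.Structure M] (R : M → M → Prop) : Prop :=
  IsSigmaDef m M (k := 2) fun v => R (v 0) (v 1)

/-- A ternary relation on `M` is Σ_m-definable with parameters. -/
def SigmaDef3 (m : ℕ) (M : Type) [lang.Structure M] (R : M → M → M → Prop) : Prop :=
  IsSigmaDef m M (k := 3) fun v => R (v 0) (v 1) (v 2)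

/-- `M` is a model of PA⁻ (the nonnegative part of a discretely ordered
commutative semiring). -/
structure PAm (M : Type) [lang.Structure M] : Prop where
  add_assoc : ∀ x y z : M, x + y + z = x + (y + z)
  add_comm : ∀ x y : M, x + y = y + x
  mul_assoc : ∀ x y z : M, x * y * z = x * (y * z)
  mul_comm : ∀ x y : M, x * y = y * x
  ldistrib : ∀ x y z : M, x * (y + z) = x * y + x * z
  add_zero : ∀ x : M, x + 0 = x
  mul_zero : ∀ x : M, x * 0 = 0
  mul_one : ∀ x : M, x * 1 = x
  lt_trans : ∀ x y z : M, x < y → y < z → x < z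
  lt_irrefl : ∀ x : M, ¬x < x
  lt_total : ∀ x y : M, x < y ∨ x = y ∨ y < x
  add_lt_add : ∀ x y z : M, x < y → x + z < y + z
  mul_lt_mul : ∀ x y z : M, x < y → 0 < z → x * z < y * z
  sub_exists : ∀ x y : M, x < y → ∃ z, x + z = y
  zero_lt_one : (0 : M) < 1
  discrete : ∀ x : M, 0 < x → (1 : M) ≤ x
  zero_le : ∀ x : M, (0 : M) ≤ x

/-- `M` satisfies the Σ_m-induction scheme (with parameters). -/
def ISig (m : ℕ) (M : Type) [lang.Structure M] : Prop :=
  ∀ A : Set M, SigmaDef1 m M A → (0 : M) ∈ A → (∀ x, x ∈ A → x + 1 ∈ A) → ∀ x, x ∈ A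

/-- `M` satisfies the Σ_m-collection (bounding) scheme (with parameters). -/
def BSig (m : ℕ) (M : Type) [lang.Structure M] : Prop :=
  ∀ R : M → M → Prop, SigmaDef2 m M R → ∀ a : M,
    (∀ x, x < a → ∃ y, R x y) → ∃ b, ∀ x, x < a → ∃ y, y < b ∧ R x y

section Coding

variable {M : Type} [lang.Structure M]

/-- `z` is the Cantor pair `⟨x, y⟩`: `2z = (x+y)(x+y+1) + 2y`. -/
def IsPairC (z x y : M) : Prop := z + z = (x + y) * (x + y + 1) + (y + y)

/-- Gödel's β-function: `x = a mod ((i+1)·b + 1)`. -/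
def BetaC (a b i x : M) : Prop :=
  x < (i + 1) * b + 1 ∧ ∃ q, a = q * ((i + 1) * b + 1) + x

/-- The sequence coded by `s` (via a Cantor pair of β-function data) has value `x`
at place `i`. -/
def SeqAt (s i x : M) : Prop := ∃ a b, IsPairC s a b ∧ BetaC a b i x

/-- `c` codes the M-finite set `X` of cardinality `card`: `c = ⟨card, s⟩` where `s`
codes the strictly increasing enumeration of `X` of length `card`. -/
def CodesFinset (c : M) (X : Set M) (card : M) : Prop :=
  ∃ s, IsPairC c card s ∧
    (∀ i, i < card → ∃ x, x ∈ X ∧ SeqAt s i x) ∧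
    (∀ i j x y, i < j → j < card → SeqAt s i x → SeqAt s j y → x < y) ∧
    (∀ x, x ∈ X ↔ ∃ i, i < card ∧ SeqAt s i x)

/-- `X` is an M-finite (coded) set. -/
def MFinite (X : Set M) : Prop := ∃ c card : M, CodesFinset c X card

/-- `d` codes an `e`-element subset `D` of `[0, y)`, i.e. an element of `[y]^e`. -/
def CodesTupleIn (d e y : M) (D : Set M) : Prop :=
  CodesFinset d D e ∧ ∀ z ∈ D, z < y

/-- `f` codes a (finite) function defined on all of `[0, a)`. -/
def CodesFunOn (f a : M) : Prop :=
  ∀ x, x < a → (∃ y, SeqAt f x y) ∧ ∀ y y', SeqAt f x y → SeqAt f x y' → y = y'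

/-- `X` is an M-coded subset of `[0, a)`. -/
def MCodedSubset (a : M) (X : Set M) : Prop :=
  MFinite X ∧ ∀ x ∈ X, x < a

end Coding

/-- An `M`-ultrafilter on `a`: an ultrafilter of the Boolean algebra of
M-finite subsets of `[0, a)`. -/
structure MUltra (M : Type) [lang.Structure M] (a : M) where
  sets : Set (Set M)
  mem_coded : ∀ X ∈ sets, MCodedSubset a X
  univ_mem : {x : M | x < a} ∈ sets
  superset_mem : ∀ X Y : Set M, X ∈ sets → MCodedSubset a Y → X ⊆ Y → Y ∈ sets
  inter_mem : ∀ X Y : Set M, X ∈ sets → Y ∈ sets → X ∩ Y ∈ sets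
  empty_not_mem : (∅ : Set M) ∉ sets
  ultra : ∀ X : Set M, MCodedSubset a X → X ∈ sets ∨ {x : M | x < a ∧ x ∉ X} ∈ sets

section Principles

variable (M : Type) [lang.Structure M]

/-- `F` is (the graph of) a Σ_m-definable injection from `[0, y)` into `[0, x)`. -/
def SigmaInjRel (m : ℕ) (F : M → M → Prop) (y x : M) : Prop :=
  SigmaDef2 m M F ∧
    (∀ u, u < y → ∃ v, v < x ∧ F u v) ∧
    (∀ u v v', u < y → F u v → F u v' → v = v') ∧
    (∀ u u' v, u < y → u' < y → F u v → F u' v → u = u')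

/-- There exists a Σ_m-definable injection from `[0, y)` into `[0, x)`. -/
def ExSigmaInj (m : ℕ) (y x : M) : Prop := ∃ F : M → M → Prop, SigmaInjRel M m F y x

/-- There exists a Σ_m-definable injection from all of `M` into `[0, a)`. -/
def SigmaInjWhole (m : ℕ) (a : M) : Prop :=
  ∃ F : M → M → Prop, SigmaDef2 m M F ∧
    (∀ u, ∃ v, v < a ∧ F u v) ∧
    (∀ u v v', F u v → F u v' → v = v') ∧
    (∀ u u' v, F u v → F u' v → u = u')

/-- CARD(Σ_m): no Σ_m-definable multivalued map sends `M` injectively below `a`. -/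
def CARD (m : ℕ) : Prop :=
  ∀ F : M → M → Prop, SigmaDef2 m M F → ∀ a : M,
    (∀ x, ∃ y, y < a ∧ F x y) →
      ∃ x0 x1 y, x0 ≠ x1 ∧ y < a ∧ F x0 y ∧ F x1 y

/-- GPHP(Σ_m): for every `x` there is `y` with no Σ_m-definable injection of
`[0,y)` into `[0,x)`. -/
def GPHP (m : ℕ) : Prop := ∀ x : M, ∃ y : M, ¬ExSigmaInj M m y x

/-- WPHP(Σ_m): for `x > 0` there is no Σ_m-definable injection of `[0,2x)` into `[0,x)`. -/
def WPHP (m : ℕ) : Prop := ∀ x : M, 0 < x → ¬ExSigmaInj M m (x + x) x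

/-- `C` is a Σ_m-definable `k`-coloring of `[y]^e` (acting on codes of
`e`-element subsets of `[0,y)`, independently of the chosen code). -/
def IsColoring (m : ℕ) (e y k : M) (C : M → M → Prop) : Prop :=
  SigmaDef2 m M C ∧
    (∀ d D, CodesTupleIn d e y D → ∃ i, i < k ∧ C d i) ∧
    (∀ d d' D i i', CodesTupleIn d e y D → CodesTupleIn d' e y D → C d i → C d' i' → i = i')

/-- FRT^e_k(Σ_m): every Σ_m-definable `k`-coloring of some `[y]^e` has an
M-finite homogeneous set of cardinality `x`, for every `x`. -/
def FRT (m : ℕ) (e k : M) : Prop :=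
  ∀ x : M, ∃ y : M, ∀ C : M → M → Prop, IsColoring M m e y k C →
    ∃ (c : M) (H : Set M), CodesFinset c H x ∧ (∀ z ∈ H, z < y) ∧
      ∃ i, ∀ d D, CodesFinset d D e → D ⊆ H → C d i

/-- fairFRT^e_k(Σ_m): the homogeneous set is required to be given as the range of a
Σ_m-definable injection from `[0,x)` into `[0,y)`. -/
def FairFRT (m : ℕ) (e k : M) : Prop :=
  ∀ x : M, ∃ y : M, ∀ C : M → M → Prop, IsColoring M m e y k C →
    ∃ H : M → M → Prop, SigmaInjRel M m H x y ∧
      ∃ i, ∀ d D, CodesFinset d D e → (∀ z ∈ D, ∃ u, u < x ∧ H u z) → C d i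

/-- `C` is a Σ_m-definable `k`-coloring of `[0, y)`. -/
def IsColoring1 (m : ℕ) (y k : M) (C : M → M → Prop) : Prop :=
  SigmaDef2 m M C ∧
    (∀ z, z < y → ∃ i, i < k ∧ C z i) ∧
    (∀ z i i', z < y → C z i → C z i' → i = i')

/-- FRT¹_k(Σ_m): every Σ_m-definable `k`-coloring of some `[0,y)` has an M-finite
homogeneous set of cardinality `x`, for every `x`. -/
def FRT1 (m : ℕ) (k : M) : Prop :=
  ∀ x : M, ∃ y : M, ∀ C : M → M → Prop, IsColoring1 M m y k C →
    ∃ (c : M) (H : Set M), CodesFinset c H x ∧ (∀ z ∈ H, z < y) ∧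
      ∃ i, ∀ z ∈ H, C z i

/-- fairFRT¹_k(Σ_m). -/
def FairFRT1 (m : ℕ) (k : M) : Prop :=
  ∀ x : M, ∃ y : M, ∀ C : M → M → Prop, IsColoring1 M m y k C →
    ∃ H : M → M → Prop, SigmaInjRel M m H x y ∧
      ∃ i, ∀ u v, u < x → H u v → C v i

end Principles

section Approx

variable {M : Type} [lang.Structure M]

/-- `f` is (the graph of) a partial function. -/
def IsPartialFun (f : M → M → Prop) : Prop := ∀ x y y', f x y → f x y' → y = y'

/-- `s` codes an approximation to the partial function `f` of length `b`. -/
def IsApprox (f : M → M → Prop) (s b : M) : Prop :=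
  (∀ i, i < b → ∃ v, SeqAt s i v) ∧
    (∀ i u v x y, i + 1 < b → SeqAt s i u → SeqAt s (i + 1) v → x ≤ u → f x y → y ≤ v)

/-- `s` codes a `g`-stretched approximation to the partial function `f` of length `b`. -/
def IsStretchedApprox (f g : M → M → Prop) (s b : M) : Prop :=
  (∀ i, i < b → ∃ v, SeqAt s i v) ∧
    (∀ i u w v x y, i + 1 < b → SeqAt s i u → g u w → SeqAt s (i + 1) v →
      x ≤ w → f x y → y ≤ v)

/-- The eventual (limit) value of `fun s => h s ·` is `x`. -/
def EvLim (h : M → M → Prop) (x : M) : Prop := ∃ s : M, ∀ t, s < t → h t x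

end Approx

/-- PΣ_m: every partial Σ_m-definable function admits approximations of every length. -/
def PSig (m : ℕ) (M : Type) [lang.Structure M] : Prop :=
  ∀ f : M → M → Prop, SigmaDef2 m M f → IsPartialFun f → ∀ b : M, ∃ s, IsApprox f s b

section Extensions

variable (M N : Type) [lang.Structure M] [lang.Structure N]

/-- `g : M → N` is Σ_m-elementary: Σ_m formulas with parameters from `M` transfer. -/
def SigmaElem (m : ℕ) (g : M → N) : Prop :=
  ∀ (p : ℕ) (φ : lang.BoundedFormula (Fin p) 0), SigmaFm m 0 φ →
    ∀ v : Fin p → M, (φ.Realize v finZeroElim ↔ φ.Realize (g ∘ v) finZeroElim)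

/-- The extension `g : M → N` is cofinal. -/
def Cofinal (g : M → N) : Prop := ∀ z : N, ∃ x : M, z ≤ g x

/-- `[0,a]^M = [0,a]^N`: every element of `N` below `g a` comes from `M`. -/
def SameBelow (g : M → N) (a : M) : Prop := ∀ z : N, z ≤ g a → ∃ x : M, g x = z

end Extensions

section Ramsey

variable {M : Type} [lang.Structure M]

/-- `f` is an M-coded `k`-coloring of `[y]^e` (assigning colors to codes of
`e`-subsets of `[0,y)`, independently of the code). -/
def CodedColoring (f e y k : M) : Prop :=
  (∀ d D, CodesTupleIn d e y D → ∃ i, i < k ∧ SeqAt f d i) ∧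
    (∀ d d' D i i', CodesTupleIn d e y D → CodesTupleIn d' e y D →
      SeqAt f d i → SeqAt f d' i' → i = i')

/-- The coded coloring `f` of `[y]^e` has an M-coded homogeneous set of cardinality `x`. -/
def CodedHomog (f e y x : M) : Prop :=
  ∃ (c : M) (H : Set M), CodesFinset c H x ∧ (∀ z ∈ H, z < y) ∧
    ∃ i, ∀ d D, CodesFinset d D e → D ⊆ H → SeqAt f d i

/-- `y = r(x, e, k)`: `y` is the least size guaranteeing coded homogeneous sets of
cardinality `x` for all coded `k`-colorings of `e`-subsets. -/
def IsRamsey (x e k y : M) : Prop :=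
  (∀ f, CodedColoring f e y k → CodedHomog f e y x) ∧
    (∀ y', y' < y → ∃ f, CodedColoring f e y' k ∧ ¬CodedHomog f e y' x)

/-- `y = r^(b)(x, e, k)`: the `b`-th iterate of the Ramsey function inside `M`. -/
def IterRamsey (x e k b y : M) : Prop :=
  ∃ s : M, SeqAt s 0 x ∧ SeqAt s b y ∧ (∀ i, i ≤ b → ∃ u, SeqAt s i u) ∧
    (∀ i u v, i < b → SeqAt s i u → SeqAt s (i + 1) v → IsRamsey u e k v)

end Ramsey

end ArithFC

namespace ArithFC

end ArithFC

open FirstOrder Language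
namespace ArithFC

/-- Universal part of PA⁻. -/
class PA0 (M : Type) [lang.Structure M] : Prop where
  add_assoc : ∀ x y z : M, x + y + z = x + (y + z)
  add_comm : ∀ x y : M, x + y = y + x
  mul_assoc : ∀ x y z : M, x * y * z = x * (y * z)
  mul_comm : ∀ x y : M, x * y = y * x
  ldistrib : ∀ x y z : M, x * (y + z) = x * y + x * z
  add_zero : ∀ x : M, x + 0 = x
  mul_zero : ∀ x : M, x * 0 = 0
  mul_one : ∀ x : M, x * 1 = x
  lt_trans : ∀ x y z : M, x < y → y < z → x < z
  lt_irrefl : ∀ x : M, ¬x < x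
  lt_total : ∀ x y : M, x < y ∨ x = y ∨ y < x
  add_lt_add : ∀ x y z : M, x < y → x + z < y + z
  mul_lt_mul : ∀ x y z : M, x < y → 0 < z → x * z < y * z
  zero_lt_one : (0 : M) < 1
  succ_le : ∀ x y : M, x < y → x + 1 ≤ y
  zero_le : ∀ x : M, (0 : M) ≤ x

class PAC (M : Type) [lang.Structure M] : Prop where
  pa : PAm M
  ind : ISig 1 M

section
variable {M : Type} [lang.Structure M]

theorem le_def (x y : M) : x ≤ y ↔ x < y ∨ x = y := Iff.rfl

instance [PAC M] : PA0 M where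
  add_assoc := PAC.pa.add_assoc
  add_comm := PAC.pa.add_comm
  mul_assoc := PAC.pa.mul_assoc
  mul_comm := PAC.pa.mul_comm
  ldistrib := PAC.pa.ldistrib
  add_zero := PAC.pa.add_zero
  mul_zero := PAC.pa.mul_zero
  mul_one := PAC.pa.mul_one
  lt_trans := PAC.pa.lt_trans
  lt_irrefl := PAC.pa.lt_irrefl
  lt_total := PAC.pa.lt_total
  add_lt_add := PAC.pa.add_lt_add
  mul_lt_mul := PAC.pa.mul_lt_mul
  zero_lt_one := PAC.pa.zero_lt_one
  zero_le := PAC.pa.zero_le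
  succ_le := by
    have h : PAm M := PAC.pa
    intro x y hxy
    obtain ⟨z, rfl⟩ := h.sub_exists x y hxy
    rcases h.zero_le z with hz | hz
    · rcases h.discrete z hz with h1 | h1
      · left
        rw [h.add_comm x 1, h.add_comm x z]
        exact h.add_lt_add _ _ _ h1
      · right; rw [h1]
    · subst hz
      rw [h.add_zero] at hxy
      exact absurd hxy (h.lt_irrefl _)

noncomputable instance [PA0 M] : CommSemiring M where
  add_assoc := PA0.add_assoc
  add_comm := PA0.add_comm
  zero_add x := by rw [PA0.add_comm]; exact PA0.add_zero x
  add_zero := PA0.add_zero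
  nsmul := nsmulRec
  mul_assoc := PA0.mul_assoc
  mul_comm := PA0.mul_comm
  left_distrib := PA0.ldistrib
  right_distrib x y z := by
    rw [PA0.mul_comm, PA0.ldistrib, PA0.mul_comm z x, PA0.mul_comm z y]
  zero_mul x := by rw [PA0.mul_comm]; exact PA0.mul_zero x
  mul_zero := PA0.mul_zero
  one_mul x := by rw [PA0.mul_comm]; exact PA0.mul_one x
  mul_one := PA0.mul_one

noncomputable instance [PA0 M] : LinearOrder M where
  le_refl x := Or.inr rfl
  le_trans x y z := by
    rintro (h | rfl) (h' | rfl)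
    · exact Or.inl (PA0.lt_trans _ _ _ h h')
    · exact Or.inl h
    · exact Or.inl h'
    · exact Or.inr rfl
  lt_iff_le_not_ge x y := by
    constructor
    · intro h
      refine ⟨Or.inl h, ?_⟩
      rintro (h' | rfl)
      · exact PA0.lt_irrefl _ (PA0.lt_trans _ _ _ h h')
      · exact PA0.lt_irrefl _ h
    · rintro ⟨h | rfl, h'⟩
      · exact h
      · exact absurd (Or.inr rfl) h'
  le_antisymm x y := by
    rintro (h | rfl) (h' | h')
    · exact absurd (PA0.lt_trans _ _ _ h h') (PA0.lt_irrefl _)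
    · exact h'.symm
    · rfl
    · rfl
  le_total x y := by
    rcases PA0.lt_total x y with h | h | h
    · exact Or.inl (Or.inl h)
    · exact Or.inl (Or.inr h)
    · exact Or.inr (Or.inl h)
  toDecidableLE := Classical.decRel _

theorem add_lt_add_r [PA0 M] (x y z : M) (h : x < y) : x + z < y + z := PA0.add_lt_add _ _ _ h

instance [PA0 M] : IsStrictOrderedRing M where
  add_le_add_left x y h z := by
    rcases h with h | rfl
    · exact Or.inl (PA0.add_lt_add _ _ _ h)
    · exact le_refl _
  le_of_add_le_add_left x y z h := by
    by_contra h'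
    have h2 := PA0.add_lt_add _ _ x (lt_of_not_ge h')
    rw [add_comm z x, add_comm y x] at h2
    exact absurd h (not_le_of_gt h2)
  zero_le_one := Or.inl PA0.zero_lt_one
  exists_pair_ne := ⟨0, 1, ne_of_lt PA0.zero_lt_one⟩
  mul_lt_mul_of_pos_left x hx y z h := by
    have := PA0.mul_lt_mul _ _ _ h hx
    show x * y < x * z
    rw [mul_comm x y, mul_comm x z]; exact this
  mul_lt_mul_of_pos_right x hx y z h := PA0.mul_lt_mul _ _ _ h hx

theorem zle [PA0 M] (x : M) : 0 ≤ x := PA0.zero_le x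
theorem succ_le_of [PA0 M] {x y : M} (h : x < y) : x + 1 ≤ y := PA0.succ_le _ _ h
theorem lt_succ_iff' [PA0 M] {x y : M} : x < y + 1 ↔ x ≤ y := by
  constructor
  · intro h
    by_contra h'
    exact absurd (lt_of_lt_of_le h (succ_le_of (lt_of_not_ge h'))) (lt_irrefl _)
  · intro h
    exact lt_of_le_of_lt h (lt_add_one _)

end
end ArithFC

open FirstOrder Language
namespace ArithFC
set_option linter.unusedSectionVars false
set_option linter.unusedVariables false
section
variable {M : Type} [lang.Structure M]

/-- Semantic terms (polynomials with parameters). -/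
inductive Tm : ∀ n : ℕ, ((Fin n → M) → M) → Prop
  | var (n : ℕ) (i : Fin n) : Tm n (fun v => v i)
  | const (n : ℕ) (c : M) : Tm n (fun _ => c)
  | add (n : ℕ) (t u) : Tm n t → Tm n u → Tm n (fun v => t v + u v)
  | mul (n : ℕ) (t u) : Tm n t → Tm n u → Tm n (fun v => t v * u v)

/-- Semantic bounded relations, with parameters. -/
inductive D0 : ∀ n : ℕ, ((Fin n → M) → Prop) → Prop
  | falsum (n : ℕ) : D0 n (fun _ => False)
  | eq (n : ℕ) (t u) : Tm n t → Tm n u → D0 n (fun v => t v = u v)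
  | lt (n : ℕ) (t u) : Tm n t → Tm n u → D0 n (fun v => t v < u v)
  | imp (n : ℕ) (R S) : D0 n R → D0 n S → D0 n (fun v => R v → S v)
  | ball (n : ℕ) (t) (R : (Fin (n+1) → M) → Prop) : Tm n t → D0 (n+1) R →
      D0 n (fun v => ∀ x, x < t v → R (Fin.cons x v))

theorem Tm.subst {n : ℕ} {t : (Fin n → M) → M} (h : Tm n t) {m : ℕ}
    (s : Fin n → (Fin m → M) → M) (hs : ∀ i, Tm m (s i)) : Tm m (fun v => t (fun i => s i v)) := by
  induction h with
  | var i => exact hs i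
  | const c => exact Tm.const _ c
  | add t u _ _ h1 h2 => exact Tm.add _ _ _ h1 h2
  | mul t u _ _ h1 h2 => exact Tm.mul _ _ _ h1 h2

theorem Tm.wk {n : ℕ} {t : (Fin n → M) → M} (h : Tm n t) :
    Tm (n+1) (fun p => t (fun i => p i.succ)) :=
  h.subst (fun i p => p i.succ) (fun i => Tm.var _ _)

theorem D0.subst {n : ℕ} {R : (Fin n → M) → Prop} (h : D0 n R) : ∀ {m : ℕ}
    (s : Fin n → (Fin m → M) → M) (_ : ∀ i, Tm m (s i)), D0 m (fun v => R (fun i => s i v)) := by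
  induction h with
  | falsum n => intro m s hs; exact D0.falsum _
  | eq n t u ht hu => intro m s hs; exact D0.eq _ _ _ (ht.subst s hs) (hu.subst s hs)
  | lt n t u ht hu => intro m s hs; exact D0.lt _ _ _ (ht.subst s hs) (hu.subst s hs)
  | imp n R S _ _ h1 h2 => intro m s hs; exact D0.imp _ _ _ (h1 s hs) (h2 s hs)
  | ball n t R ht _ h1 =>
    intro m s hs
    have h2 := D0.ball _ _ _ (ht.subst s hs)
      (h1 (m := m+1) (Fin.cons (fun p => p 0) (fun i p => s i (fun j => p j.succ)))
        (by
          intro i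
          refine Fin.cases ?_ ?_ i
          · exact Tm.var _ _
          · intro j; exact (hs j).wk))
    convert h2 using 5 with v x hx
    funext i
    refine Fin.cases ?_ ?_ i
    · rfl
    · intro j; rfl

theorem D0.congr {n : ℕ} {R S : (Fin n → M) → Prop} (h : D0 n R) (hh : ∀ v, S v ↔ R v) :
    D0 n S := by
  have : S = R := by funext v; exact propext (hh v)
  rw [this]; exact h

/-! ### Translation to formulas -/

theorem exists_map_term {α β : Type} {n : ℕ} (f : α → β) (t : lang.Term (α ⊕ Fin n)) :
    ∃ u : lang.Term (β ⊕ Fin n), ∀ (v : β → M) (xs : Fin n → M),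
      u.realize (Sum.elim v xs) = t.realize (Sum.elim (v ∘ f) xs) := by
  refine ⟨t.relabel (Sum.map f id), ?_⟩
  intro v xs
  rw [Term.realize_relabel]
  congr 1
  funext i
  cases i <;> rfl

theorem realize_bdAll {α : Type} {n : ℕ} (t : lang.Term (α ⊕ Fin n))
    (φ : lang.BoundedFormula α (n+1)) (v : α → M) (xs : Fin n → M) :
    (BoundedFormula.all ((ltFm (Term.var (Sum.inr (Fin.last n))) (t.liftAt 1 n)).imp φ)).Realize
      v xs ↔ ∀ x : M, x < t.realize (Sum.elim v xs) → φ.Realize v (Fin.snoc xs x) := by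
  rw [BoundedFormula.realize_all]
  refine forall_congr' fun x => ?_
  rw [BoundedFormula.realize_imp]
  refine imp_congr ?_ Iff.rfl
  have h1 : (t.liftAt 1 n).realize (Sum.elim v (Fin.snoc xs x : Fin (n+1) → M))
      = t.realize (Sum.elim v xs) := by
    rw [Term.realize_liftAt]
    congr 1
    funext i
    cases i with
    | inl i => rfl
    | inr i => simp [Fin.snoc]
  unfold ltFm
  show Structure.RelMap (L := lang) Rel.lt _ ↔ Structure.RelMap (L := lang) Rel.lt _
  rw [← h1]
  apply iff_of_eq
  congr 1
  funext i
  refine Fin.cases ?_ ?_ i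
  · simp [Fin.snoc]
  · intro i
    refine Fin.cases ?_ ?_ i
    · simp
    · intro i; exact i.elim0

theorem exists_map {α β : Type} {n : ℕ} (f : α → β) {φ : lang.BoundedFormula α n}
    (h : IsDelta0 n φ) : ∃ ψ : lang.BoundedFormula β n, IsDelta0 n ψ ∧
      ∀ (v : β → M) (xs : Fin n → M), ψ.Realize v xs ↔ φ.Realize (v ∘ f) xs := by
  induction h with
  | falsum n => exact ⟨_, IsDelta0.falsum n, fun v xs => Iff.rfl⟩
  | equal n t u =>
    obtain ⟨t', ht⟩ := exists_map_term (M := M) f t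
    obtain ⟨u', hu⟩ := exists_map_term (M := M) f u
    refine ⟨_, IsDelta0.equal n t' u', fun v xs => ?_⟩
    show t'.realize _ = u'.realize _ ↔ t.realize _ = u.realize _
    rw [ht, hu]
  | rel n l R ts =>
    choose ts' hts using fun i => exists_map_term (M := M) f (ts i)
    refine ⟨_, IsDelta0.rel n l R ts', fun v xs => ?_⟩
    show Structure.RelMap R (fun i => (ts' i).realize _) ↔
      Structure.RelMap R (fun i => (ts i).realize _)
    simp only [hts]
  | imp n _ _ h1 h2 =>
    obtain ⟨a, ha, ha'⟩ := h1
    obtain ⟨b, hb, hb'⟩ := h2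
    refine ⟨_, IsDelta0.imp n ha hb, fun v xs => ?_⟩
    rw [BoundedFormula.realize_imp, BoundedFormula.realize_imp, ha', hb']
  | bdAll n t _ h1 =>
    obtain ⟨a, ha, ha'⟩ := h1
    obtain ⟨t', ht⟩ := exists_map_term (M := M) f t
    refine ⟨_, IsDelta0.bdAll n t' ha, fun v xs => ?_⟩
    rw [realize_bdAll, realize_bdAll, ht]
    simp only [ha']

def RepT (k m : ℕ) (F : (Fin k → M) → (Fin m → M) → M) : Prop :=
  ∃ (p : ℕ) (t : lang.Term ((Fin k ⊕ Fin p) ⊕ Fin m)) (w : Fin p → M),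
    ∀ v xs, t.realize (Sum.elim (Sum.elim v w) xs) = F v xs

def RepF (k m : ℕ) (R : (Fin k → M) → (Fin m → M) → Prop) : Prop :=
  ∃ (p : ℕ) (φ : lang.BoundedFormula (Fin k ⊕ Fin p) m) (w : Fin p → M),
    IsDelta0 m φ ∧ ∀ v xs, φ.Realize (Sum.elim v w) xs ↔ R v xs

theorem elim_append_left {k p q : ℕ} (v : Fin k → M) (w : Fin p → M) (u : Fin q → M) :
    (Sum.elim v (Fin.append w u)) ∘ (Sum.map id (Fin.castAdd q)) = Sum.elim v w := by
  funext i; cases i <;> simp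

theorem elim_append_right {k p q : ℕ} (v : Fin k → M) (w : Fin p → M) (u : Fin q → M) :
    (Sum.elim v (Fin.append w u)) ∘ (Sum.map id (Fin.natAdd p)) = Sum.elim v u := by
  funext i; cases i <;> simp

theorem RepT.two {k m : ℕ} {F G : (Fin k → M) → (Fin m → M) → M} (hF : RepT k m F)
    (hG : RepT k m G) : ∃ (p : ℕ) (t u : lang.Term ((Fin k ⊕ Fin p) ⊕ Fin m)) (w : Fin p → M),
    (∀ v xs, t.realize (Sum.elim (Sum.elim v w) xs) = F v xs) ∧
    (∀ v xs, u.realize (Sum.elim (Sum.elim v w) xs) = G v xs) := by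
  obtain ⟨p, t, w, ht⟩ := hF
  obtain ⟨q, u, w', hu⟩ := hG
  obtain ⟨t', ht'⟩ := exists_map_term (M := M) (Sum.map id (Fin.castAdd q)) t
  obtain ⟨u', hu'⟩ := exists_map_term (M := M) (Sum.map id (Fin.natAdd p)) u
  refine ⟨p + q, t', u', Fin.append w w', fun v xs => ?_, fun v xs => ?_⟩
  · rw [ht', elim_append_left, ht]
  · rw [hu', elim_append_right, hu]

theorem Tm.rep {n : ℕ} {t : (Fin n → M) → M} (h : Tm n t) {k m : ℕ} (e : Fin n → Fin k ⊕ Fin m) :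
    RepT k m (fun v xs => t (fun i => Sum.elim v xs (e i))) := by
  induction h with
  | var i =>
    refine ⟨0, Term.var (Sum.map Sum.inl id (e i)), finZeroElim, fun v xs => ?_⟩
    show Sum.elim (Sum.elim v _) xs (Sum.map Sum.inl id (e i)) = Sum.elim v xs (e i)
    cases e i <;> rfl
  | const c =>
    exact ⟨1, Term.var (Sum.inl (Sum.inr 0)), fun _ => c, fun v xs => rfl⟩
  | add t u _ _ h1 h2 =>
    obtain ⟨p, t', u', w, ht, hu⟩ := RepT.two h1 h2
    refine ⟨p, Term.func (Func.add : lang.Functions 2) ![t', u'], w, fun v xs => ?_⟩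
    beta_reduce at ht hu ⊢
    rw [← ht, ← hu]
    show Structure.funMap (L := lang) Func.add _ = Structure.funMap (L := lang) Func.add _
    congr 1
    funext i
    fin_cases i <;> rfl
  | mul t u _ _ h1 h2 =>
    obtain ⟨p, t', u', w, ht, hu⟩ := RepT.two h1 h2
    refine ⟨p, Term.func (Func.mul : lang.Functions 2) ![t', u'], w, fun v xs => ?_⟩
    beta_reduce at ht hu ⊢
    rw [← ht, ← hu]
    show Structure.funMap (L := lang) Func.mul _ = Structure.funMap (L := lang) Func.mul _
    congr 1
    funext i
    fin_cases i <;> rfl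

theorem D0.rep {n : ℕ} {R : (Fin n → M) → Prop} (h : D0 n R) : ∀ {k m : ℕ}
    (e : Fin n → Fin k ⊕ Fin m), RepF k m (fun v xs => R (fun i => Sum.elim v xs (e i))) := by
  induction h with
  | falsum n => intro k m e; exact ⟨0, _, finZeroElim, IsDelta0.falsum m, fun v xs => Iff.rfl⟩
  | eq n t u ht hu =>
    intro k m e
    obtain ⟨p, t', u', w, ht, hu⟩ := RepT.two (ht.rep e) (hu.rep e)
    refine ⟨p, _, w, IsDelta0.equal m t' u', fun v xs => ?_⟩
    show t'.realize _ = u'.realize _ ↔ _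
    rw [ht, hu]
  | lt n t u ht hu =>
    intro k m e
    obtain ⟨p, t', u', w, ht, hu⟩ := RepT.two (ht.rep e) (hu.rep e)
    refine ⟨p, _, w, IsDelta0.rel m 2 Rel.lt ![t', u'], fun v xs => ?_⟩
    beta_reduce at ht hu ⊢
    rw [← ht, ← hu]
    show Structure.RelMap (L := lang) Rel.lt _ ↔ Structure.RelMap (L := lang) Rel.lt _
    apply iff_of_eq
    congr 1
    funext i
    fin_cases i <;> rfl
  | imp n R S _ _ h1 h2 =>
    intro k m e
    obtain ⟨p, φ, w, hφ, h1⟩ := h1 e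
    obtain ⟨q, ψ, u, hψ, h2⟩ := h2 e
    obtain ⟨φ', hφ', h1'⟩ := exists_map (M := M) (Sum.map id (Fin.castAdd q)) hφ
    obtain ⟨ψ', hψ', h2'⟩ := exists_map (M := M) (Sum.map id (Fin.natAdd p)) hψ
    refine ⟨p + q, _, Fin.append w u, IsDelta0.imp m hφ' hψ', fun v xs => ?_⟩
    rw [BoundedFormula.realize_imp, h1', h2', elim_append_left, elim_append_right, h1, h2]
  | ball n t R ht _ h1 =>
    intro k m e
    obtain ⟨p, φ, w, hφ, h1⟩ := h1 (Fin.cons (Sum.inr (Fin.last m))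
      (fun i => Sum.map id Fin.castSucc (e i)) : Fin (n+1) → Fin k ⊕ Fin (m+1))
    obtain ⟨q, t', u, h2⟩ := ht.rep e
    obtain ⟨φ', hφ', h1'⟩ := exists_map (M := M) (Sum.map id (Fin.castAdd q)) hφ
    obtain ⟨t'', h2'⟩ := exists_map_term (M := M) (Sum.map id (Fin.natAdd p)) t'
    refine ⟨p + q, _, Fin.append w u, IsDelta0.bdAll m t'' hφ', fun v xs => ?_⟩
    rw [realize_bdAll, h2', elim_append_right, h2]
    refine forall_congr' fun x => imp_congr Iff.rfl ?_
    rw [h1', elim_append_left, h1]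
    apply iff_of_eq
    beta_reduce
    congr 1
    funext i
    refine Fin.cases ?_ ?_ i
    · simp
    · intro j
      simp only [Fin.cons_succ]
      cases e j <;> simp

/-- Semantic Σ₁ relations. -/
def S1 (n : ℕ) (R : (Fin n → M) → Prop) : Prop :=
  ∃ R' : (Fin (n+1) → M) → Prop, D0 (n+1) R' ∧ ∀ v, R v ↔ ∃ x, R' (Fin.cons x v)

theorem S1.isSigmaDef {k : ℕ} {R : (Fin k → M) → Prop} (h : S1 k R) : IsSigmaDef 1 M R := by
  obtain ⟨R', h1, h2⟩ := h
  obtain ⟨p, φ, w, hφ, h3⟩ := h1.rep (k := k) (m := 1) (Fin.cons (Sum.inr 0) (fun i => Sum.inl i))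
  refine ⟨p, φ.ex, w, SigmaFm.ex 0 0 (SigmaFm.delta0 _ _ hφ), fun v => ?_⟩
  rw [h2, BoundedFormula.realize_ex]
  refine exists_congr fun x => ?_
  rw [h3]
  apply iff_of_eq
  congr 1
  funext i
  refine Fin.cases ?_ ?_ i
  · simp
  · intro j; simp

theorem S1.ind [PAC M] {A : M → Prop} (h : S1 1 (fun v : Fin 1 → M => A (v 0))) (h0 : A 0)
    (hs : ∀ x, A x → A (x+1)) (x : M) : A x :=
  PAC.ind {x | A x} h.isSigmaDef h0 hs x

end
end ArithFC

open FirstOrder Language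
namespace ArithFC
set_option linter.unusedSectionVars false
set_option linter.unusedVariables false
section
variable {M : Type} [lang.Structure M]

theorem cons_tail {n : ℕ} (p : Fin (n+1) → M) :
    (Fin.cons (p 0) (fun i => p i.succ) : Fin (n+1) → M) = p := by
  funext i
  refine Fin.cases ?_ ?_ i
  · rfl
  · intro j; rfl

theorem D0.imp' {n : ℕ} {R S : (Fin n → M) → Prop} (h : D0 n R) (h' : D0 n S) :
    D0 n (fun v => R v → S v) := D0.imp _ _ _ h h'
theorem D0.not {n : ℕ} {R : (Fin n → M) → Prop} (h : D0 n R) : D0 n (fun v => ¬ R v) :=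
  D0.imp _ _ _ h (D0.falsum n)
theorem D0.or {n : ℕ} {R S : (Fin n → M) → Prop} (h : D0 n R) (h' : D0 n S) :
    D0 n (fun v => R v ∨ S v) :=
  (h.not.imp' h').congr fun v => by tauto
theorem D0.and {n : ℕ} {R S : (Fin n → M) → Prop} (h : D0 n R) (h' : D0 n S) :
    D0 n (fun v => R v ∧ S v) :=
  (h.imp' h'.not).not.congr fun v => by tauto
theorem D0.iff {n : ℕ} {R S : (Fin n → M) → Prop} (h : D0 n R) (h' : D0 n S) :
    D0 n (fun v => R v ↔ S v) :=
  ((h.imp' h').and (h'.imp' h)).congr fun v => by tauto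

theorem D0.ballT {n : ℕ} {R : (Fin n → M) → M → Prop} {t : (Fin n → M) → M} (ht : Tm n t)
    (h : D0 (n+1) (fun p => R (fun i => p i.succ) (p 0))) :
    D0 n (fun v => ∀ x, x < t v → R v x) := D0.ball _ _ _ ht h
theorem D0.bexT {n : ℕ} {R : (Fin n → M) → M → Prop} {t : (Fin n → M) → M} (ht : Tm n t)
    (h : D0 (n+1) (fun p => R (fun i => p i.succ) (p 0))) :
    D0 n (fun v => ∃ x, x < t v ∧ R v x) :=
  (D0.ballT (R := fun v x => ¬ R v x) ht h.not).not.congr fun v => by push Not; exact Iff.rfl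

/-- Δ₀ functions bounded by a term. -/
def Fn (n : ℕ) (F : (Fin n → M) → M) : Prop :=
  ∃ t, Tm n t ∧ (∀ v, F v ≤ t v) ∧ D0 (n+1) (fun p => p 0 = F (fun i => p i.succ))

variable [PA0 M]

theorem D0.subst1 {n : ℕ} {R : (Fin n → M) → M → Prop} {F : (Fin n → M) → M}
    (h : D0 (n+1) (fun p => R (fun i => p i.succ) (p 0))) (hF : Fn n F) :
    D0 n (fun v => R v (F v)) := by
  obtain ⟨t, ht, hb, hg⟩ := hF
  have := D0.bexT (R := fun v y => y = F v ∧ R v y) (ht.add _ _ _ (Tm.const _ 1)) (hg.and h)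
  refine this.congr fun v => ?_
  constructor
  · intro h
    exact ⟨F v, lt_succ_iff'.2 (hb v), rfl, h⟩
  · rintro ⟨x, _, rfl, h⟩
    exact h

theorem D0.wk {n : ℕ} {R : (Fin n → M) → Prop} (h : D0 n R) :
    D0 (n+1) (fun p => R (fun i => p i.succ)) :=
  h.subst (fun i p => p i.succ) (fun i => Tm.var _ _)

theorem Fn.wk {n : ℕ} {F : (Fin n → M) → M} (h : Fn n F) :
    Fn (n+1) (fun p => F (fun i => p i.succ)) := by
  obtain ⟨t, ht, hb, hg⟩ := h
  refine ⟨_, ht.wk, fun v => hb _, ?_⟩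
  exact hg.subst (fun i p => (Fin.cons (p 0) (fun j => p j.succ.succ) : Fin (n+1) → M) i) (by
    intro i
    refine Fin.cases ?_ ?_ i
    · exact Tm.var _ _
    · intro j; exact Tm.var _ _)

theorem Tm.fn {n : ℕ} {F : (Fin n → M) → M} (h : Tm n F) : Fn n F :=
  ⟨F, h, fun v => le_refl _, D0.eq _ _ _ (Tm.var _ _) h.wk⟩

theorem Fn.var {n : ℕ} (i : Fin n) : Fn n (fun v : Fin n → M => v i) := (Tm.var n i).fn
theorem Fn.const {n : ℕ} (c : M) : Fn n (fun v : Fin n → M => c) := (Tm.const n c).fn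

theorem D0.rel1 {R : M → Prop} (h : D0 1 (fun v => R (v 0))) {n : ℕ} {F : (Fin n → M) → M}
    (hF : Fn n F) : D0 n (fun v => R (F v)) := by
  refine D0.subst1 (R := fun v y => R y) ?_ hF
  exact h.subst (fun i p => p 0) (fun i => Tm.var _ _)

theorem D0.rel2 {R : M → M → Prop} (h : D0 2 (fun v => R (v 0) (v 1))) {n : ℕ}
    {F G : (Fin n → M) → M} (hF : Fn n F) (hG : Fn n G) : D0 n (fun v => R (F v) (G v)) := by
  refine D0.subst1 (R := fun v y => R y (G v)) ?_ hF
  refine D0.subst1 (R := fun v y => R (v 0) y) ?_ hG.wk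
  exact h.subst (fun i p => ![p 1, p 0] i) (fun i => by fin_cases i <;> exact Tm.var _ _)

theorem D0.rel3 {R : M → M → M → Prop} (h : D0 3 (fun v => R (v 0) (v 1) (v 2))) {n : ℕ}
    {F G H : (Fin n → M) → M} (hF : Fn n F) (hG : Fn n G) (hH : Fn n H) :
    D0 n (fun v => R (F v) (G v) (H v)) := by
  refine D0.subst1 (R := fun v y => R y (G v) (H v)) ?_ hF
  refine D0.subst1 (R := fun v y => R (v 0) y (H (fun i => v i.succ))) ?_ hG.wk
  refine D0.subst1 (R := fun v y => R (v 1) (v 0) y) ?_ hH.wk.wk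
  exact h.subst (fun i p => ![p 2, p 1, p 0] i) (fun i => by fin_cases i <;> exact Tm.var _ _)

theorem D0.eqF {n : ℕ} {F G : (Fin n → M) → M} (hF : Fn n F) (hG : Fn n G) :
    D0 n (fun v => F v = G v) :=
  D0.rel2 (R := fun x y => x = y) (D0.eq _ _ _ (Tm.var _ _) (Tm.var _ _)) hF hG
theorem D0.ltF {n : ℕ} {F G : (Fin n → M) → M} (hF : Fn n F) (hG : Fn n G) :
    D0 n (fun v => F v < G v) :=
  D0.rel2 (R := fun x y => x < y) (D0.lt _ _ _ (Tm.var _ _) (Tm.var _ _)) hF hG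
theorem D0.leF {n : ℕ} {F G : (Fin n → M) → M} (hF : Fn n F) (hG : Fn n G) :
    D0 n (fun v => F v ≤ G v) := (D0.ltF hF hG).or (D0.eqF hF hG)

theorem Fn.add {n : ℕ} {F G : (Fin n → M) → M} (hF : Fn n F) (hG : Fn n G) :
    Fn n (fun v => F v + G v) := by
  have h1 := hF.wk
  have h2 := hG.wk
  obtain ⟨t, ht, hb, _⟩ := hF
  obtain ⟨s, hs, hc, _⟩ := hG
  exact ⟨_, ht.add _ _ _ hs, fun v => add_le_add (hb v) (hc v),
    D0.rel3 (R := fun x y z => x = y + z)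
      (D0.eq _ _ _ (Tm.var _ _) (Tm.add _ _ _ (Tm.var _ _) (Tm.var _ _))) (Fn.var _) h1 h2⟩

theorem Fn.mul {n : ℕ} {F G : (Fin n → M) → M} (hF : Fn n F) (hG : Fn n G) :
    Fn n (fun v => F v * G v) := by
  have h1 := hF.wk
  have h2 := hG.wk
  obtain ⟨t, ht, hb, _⟩ := hF
  obtain ⟨s, hs, hc, _⟩ := hG
  exact ⟨_, ht.mul _ _ _ hs, fun v => mul_le_mul (hb v) (hc v) (zle _) (zle _),
    D0.rel3 (R := fun x y z => x = y * z)
      (D0.eq _ _ _ (Tm.var _ _) (Tm.mul _ _ _ (Tm.var _ _) (Tm.var _ _))) (Fn.var _) h1 h2⟩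

theorem D0.ballF {n : ℕ} {R : (Fin n → M) → M → Prop} {F : (Fin n → M) → M} (hF : Fn n F)
    (h : D0 (n+1) (fun p => R (fun i => p i.succ) (p 0))) :
    D0 n (fun v => ∀ x, x < F v → R v x) := by
  refine D0.subst1 (R := fun v y => ∀ x, x < y → R v x) ?_ hF
  refine D0.ballT (R := fun v x => R (fun i => v i.succ) x) (Tm.var _ _) ?_
  exact h.subst (fun i p => (Fin.cons (p 0) (fun j => p j.succ.succ) : Fin (n+1) → M) i) (by
    intro i
    refine Fin.cases ?_ ?_ i
    · exact Tm.var _ _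
    · intro j; exact Tm.var _ _)
theorem D0.bexF {n : ℕ} {R : (Fin n → M) → M → Prop} {F : (Fin n → M) → M} (hF : Fn n F)
    (h : D0 (n+1) (fun p => R (fun i => p i.succ) (p 0))) :
    D0 n (fun v => ∃ x, x < F v ∧ R v x) :=
  (D0.ballF (R := fun v x => ¬ R v x) hF h.not).not.congr fun v => by push Not; exact Iff.rfl
theorem D0.bexLe {n : ℕ} {R : (Fin n → M) → M → Prop} {F : (Fin n → M) → M} (hF : Fn n F)
    (h : D0 (n+1) (fun p => R (fun i => p i.succ) (p 0))) :
    D0 n (fun v => ∃ x, x ≤ F v ∧ R v x) :=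
  (D0.bexF (hF.add (Fn.const 1)) h).congr fun v => by simp only [lt_succ_iff']
theorem D0.ballLe {n : ℕ} {R : (Fin n → M) → M → Prop} {F : (Fin n → M) → M} (hF : Fn n F)
    (h : D0 (n+1) (fun p => R (fun i => p i.succ) (p 0))) :
    D0 n (fun v => ∀ x, x ≤ F v → R v x) :=
  (D0.ballF (hF.add (Fn.const 1)) h).congr fun v => by simp only [lt_succ_iff']


theorem D0.s1 {n : ℕ} {R : (Fin n → M) → Prop} (h : D0 n R) : S1 n R :=
  ⟨_, h.wk, fun v => ⟨fun h => ⟨0, h⟩, fun ⟨_, h⟩ => h⟩⟩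

theorem S1.congr {n : ℕ} {R S : (Fin n → M) → Prop} (h : S1 n R) (hh : ∀ v, S v ↔ R v) :
    S1 n S := by
  have : S = R := by funext v; exact propext (hh v)
  rw [this]; exact h

/-- variables skipping: insert-like substitution `p ↦ cons (p 0) (p ∘ succ ∘ succ)` -/
theorem D0.skip {n : ℕ} {R : (Fin (n+1) → M) → Prop} (h : D0 (n+1) R) :
    D0 (n+2) (fun p => R (Fin.cons (p 0) (fun j => p j.succ.succ))) :=
  h.subst (fun i p => (Fin.cons (p 0) (fun j => p j.succ.succ) : Fin (n+1) → M) i) (by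
    intro i
    refine Fin.cases ?_ ?_ i
    · exact Tm.var _ _
    · intro j; exact Tm.var _ _)

theorem S1.ex {n : ℕ} {R : (Fin n → M) → M → Prop}
    (h : S1 (n+1) (fun p => R (fun i => p i.succ) (p 0))) : S1 n (fun v => ∃ x, R v x) := by
  obtain ⟨R', h1, h2⟩ := h
  refine ⟨fun p => ∃ x, x < p 0 + 1 ∧ ∃ y, y < p 0 + 1 ∧
    R' (Fin.cons y (Fin.cons x (fun i => p i.succ))), ?_, fun v => ?_⟩
  · refine D0.bexF ((Fn.var _).add (Fn.const _)) ?_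
    refine D0.bexF ((Fn.var _).add (Fn.const _)) ?_
    have := h1.subst (fun i p => (Fin.cons (p 0) (Fin.cons (p 1) fun j => p j.succ.succ.succ)
      : Fin (n+1+1) → M) i) (m := n+3) (by
        intro i
        refine Fin.cases ?_ ?_ i
        · exact Tm.var _ _
        · intro j
          refine Fin.cases ?_ ?_ j
          · exact Tm.var _ _
          · intro j; exact Tm.var _ _)
    exact this
  · have h3 : ∀ x, R v x ↔ ∃ y, R' (Fin.cons y (Fin.cons x v)) := fun x => h2 (Fin.cons x v)
    simp only [Fin.cons_zero, Fin.cons_succ, h3]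
    constructor
    · rintro ⟨x, y, h⟩
      exact ⟨max x y, x, lt_succ_iff'.2 (le_max_left _ _), y, lt_succ_iff'.2 (le_max_right _ _), h⟩
    · rintro ⟨_, x, _, y, _, h⟩
      exact ⟨x, y, h⟩

theorem S1.and {n : ℕ} {R S : (Fin n → M) → Prop} (h : S1 n R) (h' : S1 n S) :
    S1 n (fun v => R v ∧ S v) := by
  obtain ⟨R', h1, h2⟩ := h
  obtain ⟨S', h3, h4⟩ := h'
  have : S1 n (fun v => ∃ x, ∃ y, R' (Fin.cons x v) ∧ S' (Fin.cons y v)) := by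
    refine S1.ex ?_
    refine S1.ex ?_
    refine D0.s1 (D0.and ?_ ?_)
    · have := h1.wk
      refine this.congr fun v => ?_
      exact iff_of_eq (congrArg R' (cons_tail (fun i => v i.succ)))
    · exact h3.skip
  refine this.congr fun v => ?_
  rw [h2, h4]
  constructor
  · rintro ⟨⟨x, h⟩, ⟨y, h'⟩⟩; exact ⟨x, y, h, h'⟩
  · rintro ⟨x, y, h, h'⟩; exact ⟨⟨x, h⟩, ⟨y, h'⟩⟩

theorem S1.or {n : ℕ} {R S : (Fin n → M) → Prop} (h : S1 n R) (h' : S1 n S) :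
    S1 n (fun v => R v ∨ S v) := by
  obtain ⟨R', h1, h2⟩ := h
  obtain ⟨S', h3, h4⟩ := h'
  refine ⟨_, h1.or h3, fun v => ?_⟩
  beta_reduce
  rw [h2, h4, exists_or]

theorem S1.imp {n : ℕ} {R S : (Fin n → M) → Prop} (h : D0 n R) (h' : S1 n S) :
    S1 n (fun v => R v → S v) := by
  refine (h.not.s1.or h').congr fun v => ?_
  tauto

theorem collection [PAC M] {R : M → M → Prop} (hR : D0 2 (fun v => R (v 0) (v 1))) (a : M)
    (h : ∀ x, x < a → ∃ y, R x y) : ∃ b, ∀ x, x < a → ∃ y, y < b ∧ R x y := by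
  have key : ∀ m : M, ∃ b, ∀ x, x < m → x < a → ∃ y, y < b ∧ R x y := by
    refine S1.ind ?_ ?_ ?_
    · refine S1.ex (D0.s1 ?_)
      refine D0.ballF (Fn.var _) ?_
      refine D0.imp' (D0.ltF (Fn.var _) (Fn.const _)) ?_
      refine D0.bexF (Fn.var _) ?_
      exact D0.rel2 hR (Fn.var _) (Fn.var _)
    · exact ⟨0, fun x hx => absurd hx (not_lt_of_ge (zle x))⟩
    · rintro m ⟨b, hb⟩
      by_cases hm : m < a
      · obtain ⟨y, hy⟩ := h m hm
        refine ⟨max b (y+1), fun x hx hxa => ?_⟩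
        rcases lt_or_eq_of_le (lt_succ_iff'.1 hx) with hx | rfl
        · obtain ⟨z, hz, hz'⟩ := hb x hx hxa
          exact ⟨z, lt_max_of_lt_left hz, hz'⟩
        · exact ⟨y, lt_max_of_lt_right (lt_add_one _), hy⟩
      · refine ⟨b, fun x hx hxa => hb x ?_ hxa⟩
        exact lt_of_lt_of_le hxa (le_of_not_gt hm)
  obtain ⟨b, hb⟩ := key a
  exact ⟨b, fun x hx => hb x hx hx⟩

theorem S1.ball [PAC M] {n : ℕ} {R : (Fin n → M) → M → Prop} {F : (Fin n → M) → M} (hF : Fn n F)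
    (h : S1 (n+1) (fun p => R (fun i => p i.succ) (p 0))) :
    S1 n (fun v => ∀ x, x < F v → R v x) := by
  obtain ⟨R', h1, h2⟩ := h
  have : S1 n (fun v => ∃ b, ∀ x, x < F v → ∃ y, y < b ∧ R' (Fin.cons y (Fin.cons x v))) := by
    refine S1.ex (D0.s1 ?_)
    refine D0.ballF hF.wk ?_
    refine D0.bexF (Fn.var _) ?_
    have := h1.subst (fun i p => (Fin.cons (p 0) (Fin.cons (p 1) fun j => p j.succ.succ.succ)
      : Fin (n+1+1) → M) i) (m := n+3) (by
        intro i
        refine Fin.cases ?_ ?_ i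
        · exact Tm.var _ _
        · intro j
          refine Fin.cases ?_ ?_ j
          · exact Tm.var _ _
          · intro j; exact Tm.var _ _)
    exact this
  refine this.congr fun v => ?_
  have h3 : ∀ x, R v x ↔ ∃ y, R' (Fin.cons y (Fin.cons x v)) := fun x => h2 (Fin.cons x v)
  simp only [h3]
  constructor
  · intro h
    refine collection (R := fun x y => R' (Fin.cons y (Fin.cons x v))) ?_ _ h
    exact h1.subst (fun i p => (Fin.cons (p 1) (Fin.cons (p 0) fun j => v j)
      : Fin (n+1+1) → M) i) (m := 2) (by
        intro i
        refine Fin.cases ?_ ?_ i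
        · exact Tm.var _ _
        · intro j
          refine Fin.cases ?_ ?_ j
          · exact Tm.var _ _
          · intro j; exact Tm.const _ _)
  · rintro ⟨b, hb⟩ x hx
    obtain ⟨y, _, hy⟩ := hb x hx
    exact ⟨y, hy⟩

end
end ArithFC

open FirstOrder Language
namespace ArithFC
set_option linter.unusedSectionVars false
set_option linter.unusedVariables false
section
variable {M : Type} [lang.Structure M]

section
variable [PA0 M]

/-- Automatic verification that a relation is bounded. -/
theorem D0.auto {n : ℕ} {R : (Fin n → M) → Prop} (h : D0 n R := by
    repeat' first
      | exact Fn.var _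
      | exact Fn.const _
      | assumption
      | refine Fn.add ?_ ?_
      | refine Fn.mul ?_ ?_
      | refine D0.eqF ?_ ?_
      | refine D0.ltF ?_ ?_
      | refine D0.leF ?_ ?_
      | refine D0.and ?_ ?_
      | refine D0.bexF ?_ ?_
      | refine D0.bexLe ?_ ?_
      | refine D0.ballF ?_ ?_
      | refine D0.ballLe ?_ ?_
      | refine D0.or ?_ ?_
      | refine D0.not ?_
      | refine D0.imp' ?_ ?_) : D0 n R := h

theorem lt_of_mul_succ {s s' y : M} (h : s < s') (hy : y ≤ s) :
    s * (s + 1) + (y + y) < s' * (s' + 1) := by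
  have h1 : (s+1) * (s + 1 + 1) ≤ s' * (s' + 1) := by
    have := succ_le_of h
    exact mul_le_mul this (by gcongr) (zle _) (zle _)
  refine lt_of_lt_of_le ?_ h1
  calc s * (s + 1) + (y + y) ≤ s * (s+1) + (s + s) := by gcongr
    _ < s * (s+1) + (s + s) + (1 + 1) := lt_add_of_pos_right _ (by positivity)
    _ = _ := by ring

theorem add_self_inj {x y : M} (h : x + x = y + y) : x = y := by
  rcases lt_trichotomy x y with h' | h' | h'
  · exact absurd h (ne_of_lt (add_lt_add h' h'))
  · exact h'
  · exact absurd h (ne_of_gt (add_lt_add h' h'))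

theorem le_add_r (x y : M) : x ≤ x + y := le_add_of_nonneg_right (zle y)
theorem le_add_l (x y : M) : x ≤ y + x := le_add_of_nonneg_left (zle y)

theorem pair_inj {z x y x' y' : M} (h : IsPairC z x y) (h' : IsPairC z x' y') :
    x = x' ∧ y = y' := by
  unfold IsPairC at h h'
  have e : (x + y) * (x + y + 1) + (y + y) = (x' + y') * (x' + y' + 1) + (y' + y') := by
    rw [← h, ← h']
  have hs : x + y = x' + y' := by
    rcases lt_trichotomy (x+y) (x'+y') with h1 | h1 | h1
    · have := lt_of_mul_succ h1 (le_add_l y x)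
      rw [e] at this
      exact absurd this (not_lt_of_ge (le_add_r _ _))
    · exact h1
    · have := lt_of_mul_succ h1 (le_add_l y' x')
      rw [← e] at this
      exact absurd this (not_lt_of_ge (le_add_r _ _))
  rw [hs] at e
  have hy : y = y' := add_self_inj (add_left_cancel e)
  subst hy
  exact ⟨add_right_cancel hs, rfl⟩

theorem le_of_add_self {x y : M} (h : x + x ≤ y + y) : x ≤ y := by
  by_contra h'
  have h' := lt_of_not_ge h'
  exact absurd h (not_le_of_gt (add_lt_add h' h'))

theorem one_le_of_pos {x : M} (h : 0 < x) : 1 ≤ x := by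
  have := succ_le_of h
  rwa [zero_add] at this

theorem le_sq (x : M) : x ≤ x * x := by
  rcases lt_or_eq_of_le (zle x) with h | h
  · exact le_mul_of_one_le_left (zle _) (one_le_of_pos h)
  · rw [← h]; simp

theorem pair_le {z x y : M} (h : IsPairC z x y) : x ≤ z ∧ y ≤ z := by
  unfold IsPairC at h
  constructor
  · apply le_of_add_self
    rw [h]
    have h1 : x ≤ x + y := le_add_r _ _
    calc x + x ≤ (x+y) * (x+y) + (x + y) := add_le_add (h1.trans (le_sq _)) h1
      _ = (x+y) * (x+y+1) := by ring
      _ ≤ _ := le_add_r _ _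
  · apply le_of_add_self
    rw [h]
    exact le_add_l _ _

theorem div_unique_aux {m q q' x x' : M} (hx : x < m) (h : q < q') : q * m + x < q' * m + x' := by
  have h1 := succ_le_of h
  calc q * m + x < q * m + m := by gcongr
    _ = (q+1) * m := by ring
    _ ≤ q' * m := mul_le_mul_of_nonneg_right h1 (zle _)
    _ ≤ _ := le_add_r _ _

theorem div_unique {m q q' x x' : M} (hx : x < m) (hx' : x' < m) (h : q * m + x = q' * m + x') :
    q = q' ∧ x = x' := by
  rcases lt_trichotomy q q' with h1 | h1 | h1
  · exact absurd h (ne_of_lt (div_unique_aux hx h1))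
  · subst h1; exact ⟨rfl, add_left_cancel h⟩
  · exact absurd h (ne_of_gt (div_unique_aux hx' h1))

theorem seqAt_unique {s i x y : M} (h : SeqAt s i x) (h' : SeqAt s i y) : x = y := by
  obtain ⟨a, b, hp, hx, q, hq⟩ := h
  obtain ⟨a', b', hp', hx', q', hq'⟩ := h'
  obtain ⟨rfl, rfl⟩ := pair_inj hp hp'
  exact (div_unique hx hx' (hq.symm.trans hq')).2

theorem seqAt_le {s i x : M} (h : SeqAt s i x) : x ≤ s := by
  obtain ⟨a, b, hp, hx, q, hq⟩ := h
  refine le_trans ?_ (pair_le hp).1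
  rw [hq]; exact le_add_l _ _

theorem seqAt_iff {s i x : M} : SeqAt s i x ↔ ∃ a, a ≤ s ∧ ∃ b, b ≤ s ∧
    (s + s = (a + b) * (a + b + 1) + (b + b) ∧ (x < (i + 1) * b + 1 ∧
      ∃ q, q ≤ a ∧ a = q * ((i + 1) * b + 1) + x)) := by
  constructor
  · rintro ⟨a, b, hp, hx, q, hq⟩
    refine ⟨a, (pair_le hp).1, b, (pair_le hp).2, hp, hx, q, ?_, hq⟩
    rw [hq]
    calc q = q * 1 := (mul_one q).symm
      _ ≤ q * ((i + 1) * b + 1) := mul_le_mul_of_nonneg_left (le_add_l _ _) (zle _)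
      _ ≤ _ := le_add_r _ _
  · rintro ⟨a, _, b, _, hp, hx, q, _, hq⟩
    exact ⟨a, b, hp, hx, q, hq⟩

theorem D0.seqAt {n : ℕ} {F G H : (Fin n → M) → M} (hF : Fn n F) (hG : Fn n G) (hH : Fn n H) :
    D0 n (fun v => SeqAt (F v) (G v) (H v)) := by
  refine D0.rel3 (R := fun s i x => SeqAt s i x) ?_ hF hG hH
  simp only [seqAt_iff]
  exact D0.auto
end

variable [PAC M]

theorem exists_pred {x : M} (h : x ≠ 0) : ∃ y, x = y + 1 := by
  have h1 := one_le_of_pos (lt_of_le_of_ne (zle x) (Ne.symm h))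
  rcases h1 with h1 | h1
  · obtain ⟨z, hz⟩ := (PAC.pa (M := M)).sub_exists _ _ h1
    exact ⟨z, by rw [← hz, add_comm]⟩
  · exact ⟨0, by rw [← h1, zero_add]⟩

theorem le_exists_add {x y : M} (h : x ≤ y) : ∃ z, y = x + z := by
  rcases h with h | h
  · obtain ⟨z, hz⟩ := (PAC.pa (M := M)).sub_exists _ _ h
    exact ⟨z, hz.symm⟩
  · exact ⟨0, by rw [h, add_zero]⟩

theorem exists_half (s : M) : ∃ h, h + h = s * (s + 1) := by
  revert s
  refine S1.ind ?_ ?_ ?_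
  · exact S1.ex (D0.s1 D0.auto)
  · exact ⟨0, by ring⟩
  · rintro s ⟨h, hh⟩
    exact ⟨h + (s + 1), by rw [show h + (s+1) + (h + (s+1)) = (h + h) + (s+1) * (1 + 1) by ring, hh]; ring⟩

theorem exists_pair (x y : M) : ∃ z, IsPairC z x y := by
  obtain ⟨h, hh⟩ := exists_half (x + y)
  exact ⟨h + y, by unfold IsPairC; rw [← hh]; ring⟩

theorem exists_unpair (z : M) : ∃ x y, IsPairC z x y := by
  unfold IsPairC
  revert z
  refine S1.ind ?_ ?_ ?_
  · exact S1.ex (S1.ex (D0.s1 D0.auto))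
  · exact ⟨0, 0, by ring⟩
  · rintro z ⟨x, y, h⟩
    by_cases hx : x = 0
    · subst hx
      refine ⟨y + 1, 0, ?_⟩
      rw [show z + 1 + (z + 1) = z + z + (1 + 1) by ring, h]; ring
    · obtain ⟨x, rfl⟩ := exists_pred hx
      refine ⟨x, y + 1, ?_⟩
      rw [show z + 1 + (z + 1) = z + z + (1 + 1) by ring, h]; ring

theorem exists_div (m : M) (hm : 0 < m) (a : M) : ∃ q r, r < m ∧ a = q * m + r := by
  revert a
  refine S1.ind ?_ ?_ ?_
  · exact S1.ex (S1.ex (D0.s1 D0.auto))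
  · exact ⟨0, 0, hm, by ring⟩
  · rintro a ⟨q, r, hr, rfl⟩
    rcases succ_le_of hr with h | h
    · exact ⟨q, r + 1, h, by ring⟩
    · exact ⟨q + 1, 0, hm, by rw [← h]; ring⟩

theorem seqAt_exists (s i : M) : ∃ x, SeqAt s i x := by
  obtain ⟨a, b, hp⟩ := exists_unpair s
  obtain ⟨q, r, hr, h⟩ := exists_div ((i+1) * b + 1) (lt_of_lt_of_le PA0.zero_lt_one (le_add_l _ _)) a
  exact ⟨r, a, b, hp, hr, q, h⟩

noncomputable def val (s i : M) : M := (seqAt_exists s i).choose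
theorem val_spec (s i : M) : SeqAt s i (val s i) := (seqAt_exists s i).choose_spec
theorem seqAt_iff_val {s i x : M} : SeqAt s i x ↔ x = val s i :=
  ⟨fun h => seqAt_unique h (val_spec s i), fun h => h ▸ val_spec s i⟩
theorem val_le (s i : M) : val s i ≤ s := seqAt_le (val_spec s i)

theorem Fn.val {n : ℕ} {F G : (Fin n → M) → M} (hF : Fn n F) (hG : Fn n G) :
    Fn n (fun v => val (F v) (G v)) := by
  have h := D0.seqAt hF.wk hG.wk (Fn.var (n := n+1) 0)
  obtain ⟨t, ht, hb, _⟩ := hF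
  exact ⟨t, ht, fun v => (val_le _ _).trans (hb v), h.congr fun p => seqAt_iff_val.symm⟩

theorem codesFunOn (f a : M) : CodesFunOn f a :=
  fun x _ => ⟨seqAt_exists f x, fun y y' => seqAt_unique⟩

end
end ArithFC

open FirstOrder Language
namespace ArithFC
set_option linter.unusedSectionVars false
set_option linter.unusedVariables false
section
variable {M : Type} [lang.Structure M] [PAC M]

theorem not_lt_zero' (x : M) : ¬ x < 0 := not_lt_of_ge (zle x)

theorem lt_succ_cases {x n : M} (h : x < n + 1) : x < n ∨ x = n :=
  lt_or_eq_of_le (lt_succ_iff'.1 h)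

theorem exists_mult (B n : M) : ∃ b, 0 < b ∧ B ≤ b ∧ ∀ i, i < n → ∃ q, b = (i+1) * q := by
  revert n
  refine S1.ind ?_ ?_ ?_
  · refine S1.ex (S1.and (D0.s1 D0.auto) (S1.and (D0.s1 D0.auto) (S1.ball (Fn.var _) ?_)))
    exact S1.ex (D0.s1 D0.auto)
  · refine ⟨B + 1, lt_of_lt_of_le PA0.zero_lt_one (le_add_l _ _), le_add_r _ _, ?_⟩
    intro i hi; exact absurd hi (not_lt_zero' _)
  · rintro n ⟨b, hb, hB, h⟩
    have h1 : (1 : M) ≤ n + 1 := le_add_l _ _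
    refine ⟨b * (n+1), mul_pos hb (lt_of_lt_of_le PA0.zero_lt_one h1),
      hB.trans (le_mul_of_one_le_right (zle _) h1), ?_⟩
    intro i hi
    rcases lt_succ_cases hi with hi | rfl
    · obtain ⟨q, hq⟩ := h i hi
      exact ⟨q * (n+1), by rw [hq]; ring⟩
    · exact ⟨b, by ring⟩

/-- `m_k` is invertible modulo `m_j` for `k < j < n`. -/
theorem inv_mod {b n k j : M} (hb : 0 < b) (hd : ∀ i, i < n → ∃ q, b = (i+1) * q) (hkj : k < j)
    (hj : j < n) : ∃ u q, u * ((k+1) * b + 1) = q * ((j+1) * b + 1) + 1 := by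
  obtain ⟨d, rfl⟩ := le_exists_add (succ_le_of hkj)
  have hdn : d < n := lt_of_le_of_lt (le_add_l _ _) hj
  obtain ⟨e, he⟩ := hd d hdn
  obtain ⟨w, hw⟩ := exists_pred (x := (k + 1 + d + 1) * b) (ne_of_gt (mul_pos
    (lt_of_lt_of_le PA0.zero_lt_one (le_add_l _ _)) hb))
  set J := k + 1 + d + 1 with hJ
  have h1 : J * e * ((k+1) * b + 1) = b + (k+1) * e * (J * b + 1) := by
    have : (k+1)*e + (d+1) * e = J * e := by rw [hJ]; ring
    calc J * e * ((k+1) * b + 1) = J * e * ((k+1) * b) + J * e := by ring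
      _ = J * e * ((k+1) * b) + ((k+1)*e + (d+1) * e) := by rw [this]
      _ = J * e * ((k+1) * b) + ((k+1)*e + b) := by rw [← he]
      _ = _ := by ring
  refine ⟨(J * b) * J * (J * e), w + (J * b) * J * ((k+1) * e), ?_⟩
  calc (J * b) * J * (J * e) * ((k+1) * b + 1) = (J * b) * J * (J * e * ((k+1) * b + 1)) := by ring
    _ = (J * b) * J * ((k+1) * e) * (J * b + 1) + (J * b) * (J * b) := by rw [h1]; ring
    _ = _ := by rw [hw]; ring

theorem crt {R : M → M → Prop} (hR : D0 2 (fun v => R (v 0) (v 1))) {b n B : M} (hb : 0 < b)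
    (hB : B ≤ b) (hd : ∀ i, i < n → ∃ q, b = (i+1) * q)
    (h : ∀ x, x < n → ∃ y, y < B ∧ R x y) (k : M) :
    ∃ A P, ∀ i, i < n →
      (i < k → ∃ r, P = r * ((i+1) * b + 1)) ∧
      (i < k → ∃ y q, y < B ∧ R i y ∧ A = q * ((i+1) * b + 1) + y) ∧
      (k ≤ i → ∃ u q, u * P = q * ((i+1) * b + 1) + 1) := by
  revert k
  refine S1.ind ?_ ?_ ?_
  · refine S1.ex (S1.ex (S1.ball (Fn.const _) (S1.and ?_ (S1.and ?_ ?_))))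
    · exact S1.imp D0.auto (S1.ex (D0.s1 D0.auto))
    · refine S1.imp D0.auto (S1.ex (S1.ex (D0.s1 ?_)))
      exact D0.and D0.auto (D0.and (D0.rel2 hR (Fn.var _) (Fn.var _)) D0.auto)
    · exact S1.imp D0.auto (S1.ex (S1.ex (D0.s1 D0.auto)))
  · refine ⟨0, 1, fun i hi => ⟨fun h => absurd h (not_lt_zero' _),
      fun h => absurd h (not_lt_zero' _), fun _ => ⟨1, 0, by ring⟩⟩⟩
  · rintro k ⟨A, P, hAP⟩
    by_cases hk : k < n
    swap
    · refine ⟨A, P, fun i hi => ?_⟩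
      obtain ⟨h1, h2, h3⟩ := hAP i hi
      have hik : i < k := lt_of_lt_of_le hi (le_of_not_gt hk)
      refine ⟨fun _ => h1 hik, fun _ => h2 hik, fun h => ?_⟩
      exact absurd (lt_of_lt_of_le (lt_add_one k) h) (not_lt_of_gt hik)
    obtain ⟨u, q, huq⟩ := (hAP k hk).2.2 le_rfl
    obtain ⟨y, hy, hyR⟩ := h k hk
    set w := (k+1) * b with hw
    refine ⟨A + u * (y + w * A) * P, P * (w + 1), fun i hi => ⟨fun hik => ?_, fun hik => ?_, fun hik => ?_⟩⟩
    · rcases lt_succ_cases hik with hik | rfl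
      · obtain ⟨r, hr⟩ := (hAP i hi).1 hik
        exact ⟨r * (w+1), by rw [hr]; ring⟩
      · exact ⟨P, rfl⟩
    · rcases lt_succ_cases hik with hik | rfl
      · obtain ⟨r, hr⟩ := (hAP i hi).1 hik
        obtain ⟨y', q', hy', hR', hA⟩ := (hAP i hi).2.1 hik
        refine ⟨y', q' + u * (y + w * A) * r, hy', hR', ?_⟩
        calc A + u * (y + w * A) * P
            = (q' * ((i+1) * b + 1) + y') + u * (y + w * A) * (r * ((i+1) * b + 1)) := by
              rw [← hA, ← hr]
          _ = _ := by ring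
      · refine ⟨y, q * (y + w * A) + A, hy, hyR, ?_⟩
        calc A + u * (y + w * A) * P = A + (u * P) * (y + w * A) := by ring
          _ = A + (q * (w + 1) + 1) * (y + w * A) := by rw [huq]
          _ = _ := by ring
    · have hki : k < i := lt_of_lt_of_le (lt_add_one k) hik
      obtain ⟨u1, q1, h1⟩ := (hAP i hi).2.2 hki.le
      obtain ⟨u2, q2, h2⟩ := inv_mod hb hd hki hi
      refine ⟨u1 * u2, q1 * q2 * ((i+1) * b + 1) + q1 + q2, ?_⟩
      calc u1 * u2 * (P * (w+1)) = (u1 * P) * (u2 * (w + 1)) := by ring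
        _ = (q1 * ((i+1) * b + 1) + 1) * (q2 * ((i+1) * b + 1) + 1) := by rw [h1, h2]
        _ = _ := by ring

/-- Coding of Δ₀ choice functions. -/
theorem comprehension {R : M → M → Prop} (hR : D0 2 (fun v => R (v 0) (v 1))) (a : M)
    (h : ∀ x, x < a → ∃ y, R x y) : ∃ f, ∀ x, x < a → R x (val f x) := by
  obtain ⟨B, hB⟩ := collection hR a h
  obtain ⟨b, hb, hBb, hd⟩ := exists_mult B a
  obtain ⟨A, P, hAP⟩ := crt hR hb hBb hd hB a
  obtain ⟨f, hf⟩ := exists_pair A b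
  refine ⟨f, fun x hx => ?_⟩
  obtain ⟨y, q, hy, hyR, hA⟩ := (hAP x hx).2.1 hx
  have : SeqAt f x y := by
    refine ⟨A, b, hf, ?_, q, hA⟩
    refine lt_succ_iff'.2 (hy.le.trans (hBb.trans ?_))
    exact le_mul_of_one_le_left (zle _) (le_add_l _ _)
  rw [← seqAt_iff_val.1 this]
  exact hyR

theorem comprehensionFn {F : M → M} (hF : Fn 1 (fun v => F (v 0))) (a : M) :
    ∃ f, ∀ x, x < a → val f x = F x := by
  refine comprehension (R := fun x y => y = F x) ?_ a (fun x _ => ⟨_, rfl⟩)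
  obtain ⟨t, ht, hb, h⟩ := hF
  exact h.subst (fun i p => ![p 1, p 0] i) (fun i => by fin_cases i <;> exact Tm.var _ _)

theorem exists_extend (s n y : M) : ∃ s', (∀ i, i < n → val s' i = val s i) ∧ val s' n = y := by
  obtain ⟨f, hf⟩ := comprehension (M := M)
    (R := fun i z => (i < n → SeqAt s i z) ∧ (i = n → z = y))
    (D0.and (D0.imp' D0.auto (D0.seqAt (Fn.const _) (Fn.var _) (Fn.var _))) D0.auto) (n+1) (by
      intro x hx
      rcases lt_succ_cases hx with h | rfl
      · exact ⟨val s x, fun _ => val_spec _ _, fun h' => absurd h (by rw [h']; exact lt_irrefl _)⟩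
      · exact ⟨y, fun h => absurd h (lt_irrefl _), fun _ => rfl⟩)
  exact ⟨f, fun i hi => seqAt_iff_val.1 ((hf i (hi.trans (lt_add_one _))).1 hi),
    (hf n (lt_add_one _)).2 rfl⟩

/-- Bounded Δ₀ sets are coded. -/
theorem mfinite_of_D0 {X : M → Prop} (hX : D0 1 (fun v => X (v 0))) (a : M) :
    MCodedSubset a {x | x < a ∧ X x} := by
  have key : ∀ n : M, ∃ card s, (∀ i, i < card → X (val s i) ∧ val s i < n) ∧
      (∀ j, j < card → ∀ i, i < j → val s i < val s j) ∧
      (∀ x, x < n → X x → ∃ i, i < card ∧ val s i = x) := by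
    refine S1.ind ?_ ?_ ?_
    · refine S1.ex (S1.ex (D0.s1 (D0.and ?_ (D0.and ?_ ?_))))
      · refine D0.ballF (Fn.var _) (D0.and (D0.rel1 hX ?_) (D0.ltF ?_ (Fn.var _)))
        · exact (Fn.var _).val (Fn.var _)
        · exact (Fn.var _).val (Fn.var _)
      · refine D0.ballF (Fn.var _) (D0.ballF (Fn.var _) (D0.ltF ?_ ?_))
        · exact (Fn.var _).val (Fn.var _)
        · exact (Fn.var _).val (Fn.var _)
      · refine D0.ballF (Fn.var _) (D0.imp' (D0.rel1 hX (Fn.var _)) (D0.bexF (Fn.var _)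
          (D0.eqF ?_ (Fn.var _))))
        exact (Fn.var _).val (Fn.var _)
    · exact ⟨0, 0, fun i h => absurd h (not_lt_zero' _), fun i h => absurd h (not_lt_zero' _),
        fun i h => absurd h (not_lt_zero' _)⟩
    · rintro n ⟨card, s, h1, h2, h3⟩
      by_cases hn : X n
      · obtain ⟨s', hs, hs'⟩ := exists_extend s card n
        refine ⟨card + 1, s', fun i hi => ?_, fun j hj i hij => ?_, fun x hx hXx => ?_⟩
        · rcases lt_succ_cases hi with hi | rfl
          · rw [hs i hi]
            exact ⟨(h1 i hi).1, (h1 i hi).2.trans (lt_add_one _)⟩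
          · rw [hs']; exact ⟨hn, lt_add_one _⟩
        · rcases lt_succ_cases hj with hj | rfl
          · rw [hs i (hij.trans hj), hs j hj]; exact h2 j hj i hij
          · rw [hs', hs i hij]; exact (h1 i hij).2
        · rcases lt_succ_cases hx with hx | rfl
          · obtain ⟨i, hi, hi'⟩ := h3 x hx hXx
            exact ⟨i, hi.trans (lt_add_one _), by rw [hs i hi, hi']⟩
          · exact ⟨card, lt_add_one _, hs'⟩
      · refine ⟨card, s, fun i hi => ⟨(h1 i hi).1, (h1 i hi).2.trans (lt_add_one _)⟩, h2,
          fun x hx hXx => ?_⟩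
        rcases lt_succ_cases hx with hx | rfl
        · exact h3 x hx hXx
        · exact absurd hXx hn
  refine ⟨?_, fun x hx => hx.1⟩
  obtain ⟨card, s, h1, h2, h3⟩ := key a
  obtain ⟨c, hc⟩ := exists_pair card s
  refine ⟨c, card, s, hc, fun i hi => ⟨val s i, ⟨(h1 i hi).2, (h1 i hi).1⟩, val_spec _ _⟩, ?_, ?_⟩
  · intro i j x y hij hj hx hy
    rw [seqAt_iff_val.1 hx, seqAt_iff_val.1 hy]
    exact h2 j hj i hij
  · intro x
    constructor
    · rintro ⟨hx, hX⟩
      obtain ⟨i, hi, rfl⟩ := h3 x hx hX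
      exact ⟨i, hi, val_spec _ _⟩
    · rintro ⟨i, hi, hx⟩
      rw [seqAt_iff_val.1 hx]
      exact ⟨(h1 i hi).2, (h1 i hi).1⟩

end
end ArithFC

open FirstOrder Language
namespace ArithFC
set_option linter.unusedSectionVars false
set_option linter.unusedVariables false
section
variable {M : Type} [lang.Structure M] [PAC M]

theorem exC (a c : M) : ∃ f, ∀ x, x < a → val f x = c := comprehensionFn (F := fun _ => c) (Fn.const _) a
theorem exId (a : M) : ∃ f, ∀ x, x < a → val f x = x := comprehensionFn (F := fun x => x) (Fn.var _) a
theorem exAdd (a f g : M) : ∃ h, ∀ x, x < a → val h x = val f x + val g x :=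
  comprehensionFn (F := fun x => val f x + val g x)
    (((Fn.const _).val (Fn.var _)).add ((Fn.const _).val (Fn.var _))) a
theorem exMul (a f g : M) : ∃ h, ∀ x, x < a → val h x = val f x * val g x :=
  comprehensionFn (F := fun x => val f x * val g x)
    (((Fn.const _).val (Fn.var _)).mul ((Fn.const _).val (Fn.var _))) a

noncomputable def constC (a c : M) : M := (exC a c).choose
noncomputable def idC (a : M) : M := (exId a).choose
noncomputable def addC (a f g : M) : M := (exAdd a f g).choose
noncomputable def mulC (a f g : M) : M := (exMul a f g).choose
theorem val_constC (a c : M) {x : M} (h : x < a) : val (constC a c) x = c := (exC a c).choose_spec x h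
theorem val_idC (a : M) {x : M} (h : x < a) : val (idC a) x = x := (exId a).choose_spec x h
theorem val_addC (a f g : M) {x : M} (h : x < a) : val (addC a f g) x = val f x + val g x :=
  (exAdd a f g).choose_spec x h
theorem val_mulC (a f g : M) {x : M} (h : x < a) : val (mulC a f g) x = val f x * val g x :=
  (exMul a f g).choose_spec x h

variable {a : M} (U : MUltra M a)

/-- `P` holds `U`-almost everywhere. -/
def Lg (P : M → Prop) : Prop := {x | x < a ∧ P x} ∈ U.sets

variable {U}

theorem Lg.mono {P Q : M → Prop} (h : Lg U P) (hQ : D0 1 (fun v => Q (v 0)))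
    (hPQ : ∀ x, x < a → P x → Q x) : Lg U Q :=
  U.superset_mem _ _ h (mfinite_of_D0 hQ a) fun x hx => ⟨hx.1, hPQ x hx.1 hx.2⟩

theorem Lg.and {P Q : M → Prop} (h : Lg U P) (h' : Lg U Q) : Lg U (fun x => P x ∧ Q x) := by
  have := U.inter_mem _ _ h h'
  have e : {x | x < a ∧ P x} ∩ {x | x < a ∧ Q x} = {x | x < a ∧ (P x ∧ Q x)} := by
    ext x; simp only [Set.mem_inter_iff, Set.mem_setOf_eq]; tauto
  rw [e] at this
  exact this

theorem Lg.of_forall {Q : M → Prop} (hQ : D0 1 (fun v => Q (v 0)))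
    (h : ∀ x, x < a → Q x) : Lg U Q :=
  U.superset_mem _ _ U.univ_mem (mfinite_of_D0 hQ a) fun x hx => ⟨hx, h x hx⟩

theorem Lg.exists {P : M → Prop} (h : Lg U P) : ∃ x, x < a ∧ P x := by
  by_contra h'
  have : {x | x < a ∧ P x} = ∅ := by
    ext x; simp only [Set.mem_setOf_eq, Set.mem_empty_iff_false, iff_false]
    exact fun hx => h' ⟨x, hx⟩
  unfold Lg at h
  rw [this] at h
  exact U.empty_not_mem h

theorem Lg.em {P : M → Prop} (hP : D0 1 (fun v => P (v 0))) : Lg U P ∨ Lg U (fun x => ¬ P x) := by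
  rcases U.ultra _ (mfinite_of_D0 hP a) with h | h
  · exact Or.inl h
  · right
    have e : {x | x < a ∧ x ∉ {x | x < a ∧ P x}} = {x | x < a ∧ ¬ P x} := by
      ext x; simp only [Set.mem_setOf_eq]; tauto
    rw [e] at h
    exact h

theorem D0.eqV (f g : M) : D0 1 (fun v => val f (v 0) = val g (v 0)) :=
  D0.eqF ((Fn.const _).val (Fn.var _)) ((Fn.const _).val (Fn.var _))
theorem D0.ltV (f g : M) : D0 1 (fun v => val f (v 0) < val g (v 0)) :=
  D0.ltF ((Fn.const _).val (Fn.var _)) ((Fn.const _).val (Fn.var _))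

variable (U)
def ust : Setoid M where
  r f g := Lg U (fun x => val f x = val g x)
  iseqv := ⟨fun f => Lg.of_forall (D0.eqV _ _) fun _ _ => rfl,
    fun h => h.mono (D0.eqV _ _) fun _ _ h => h.symm,
    fun h h' => (h.and h').mono (D0.eqV _ _) fun _ _ h => h.1.trans h.2⟩

/-- The ultrapower. -/
def UP : Type := Quotient (ust U)

def mkU (f : M) : UP U := Quotient.mk (ust U) f

variable {U}
theorem mkU_eq {f g : M} : mkU U f = mkU U g ↔ Lg U (fun x => val f x = val g x) :=
  ⟨fun h => Quotient.exact h, fun h => Quotient.sound h⟩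

theorem mkU_surj (z : UP U) : ∃ f, mkU U f = z := Quotient.exists_rep z
noncomputable def rep (z : UP U) : M := (mkU_surj z).choose
theorem mkU_rep (z : UP U) : mkU U (rep z) = z := (mkU_surj z).choose_spec
theorem rep_mkU (f : M) : Lg U (fun x => val (rep (mkU U f)) x = val f x) := mkU_eq.1 (mkU_rep _)

noncomputable instance : lang.Structure (UP U) where
  funMap {n} (f : Func n) := match n, f with
    | _, Func.zero => fun _ => mkU U (constC a 0)
    | _, Func.one => fun _ => mkU U (constC a 1)
    | _, Func.add => fun v => mkU U (addC a (rep (v 0)) (rep (v 1)))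
    | _, Func.mul => fun v => mkU U (mulC a (rep (v 0)) (rep (v 1)))
  RelMap {n} (r : Rel n) := match n, r with
    | _, Rel.lt => fun v => Lg U (fun x => val (rep (v 0)) x < val (rep (v 1)) x)

theorem zeroU : (0 : UP U) = mkU U (constC a 0) := rfl
theorem oneU : (1 : UP U) = mkU U (constC a 1) := rfl
theorem addU (f g : M) : mkU U f + mkU U g = mkU U (addC a f g) := by
  have h : mkU U f + mkU U g = mkU U (addC a (rep (mkU U f)) (rep (mkU U g))) := rfl
  rw [h, mkU_eq]
  refine ((rep_mkU f).and (rep_mkU g)).mono (D0.eqV _ _) fun x hx h => ?_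
  rw [val_addC _ _ _ hx, val_addC _ _ _ hx, h.1, h.2]
theorem mulU (f g : M) : mkU U f * mkU U g = mkU U (mulC a f g) := by
  have h : mkU U f * mkU U g = mkU U (mulC a (rep (mkU U f)) (rep (mkU U g))) := rfl
  rw [h, mkU_eq]
  refine ((rep_mkU f).and (rep_mkU g)).mono (D0.eqV _ _) fun x hx h => ?_
  rw [val_mulC _ _ _ hx, val_mulC _ _ _ hx, h.1, h.2]
theorem ltU {f g : M} : mkU U f < mkU U g ↔ Lg U (fun x => val f x < val g x) := by
  have h : mkU U f < mkU U g ↔ Lg U (fun x => val (rep (mkU U f)) x < val (rep (mkU U g)) x) :=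
    Iff.rfl
  rw [h]
  constructor
  · intro h
    refine (h.and ((rep_mkU f).and (rep_mkU g))).mono (D0.ltV _ _) fun x hx h => ?_
    rw [← h.2.1, ← h.2.2]; exact h.1
  · intro h
    refine (h.and ((rep_mkU f).and (rep_mkU g))).mono (D0.ltV _ _) fun x hx h => ?_
    rw [h.2.1, h.2.2]; exact h.1

theorem leU {f g : M} (h : Lg U (fun x => val f x ≤ val g x)) : mkU U f ≤ mkU U g := by
  rcases Lg.em (U := U) (P := fun x => val f x < val g x) (D0.ltV f g) with h1 | h1
  · exact Or.inl (ltU.2 h1)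
  · refine Or.inr (mkU_eq.2 ((h.and h1).mono (D0.eqV _ _) fun x hx h => ?_))
    exact le_antisymm h.1 (le_of_not_gt h.2)

theorem D0.leV (f g : M) : D0 1 (fun v => val f (v 0) ≤ val g (v 0)) :=
  D0.leF ((Fn.const _).val (Fn.var _)) ((Fn.const _).val (Fn.var _))

theorem eqU {f g : M} (h : ∀ x, x < a → val f x = val g x) : mkU U f = mkU U g :=
  mkU_eq.2 (Lg.of_forall (D0.eqV _ _) h)

instance : PA0 (UP U) where
  add_assoc x y z := by
    obtain ⟨f, rfl⟩ := mkU_surj x; obtain ⟨g, rfl⟩ := mkU_surj y; obtain ⟨h, rfl⟩ := mkU_surj z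
    simp only [addU]
    exact eqU fun x hx => by simp only [val_addC _ _ _ hx, add_assoc]
  add_comm x y := by
    obtain ⟨f, rfl⟩ := mkU_surj x; obtain ⟨g, rfl⟩ := mkU_surj y
    simp only [addU]
    exact eqU fun x hx => by simp only [val_addC _ _ _ hx, add_comm]
  mul_assoc x y z := by
    obtain ⟨f, rfl⟩ := mkU_surj x; obtain ⟨g, rfl⟩ := mkU_surj y; obtain ⟨h, rfl⟩ := mkU_surj z
    simp only [mulU]
    exact eqU fun x hx => by simp only [val_mulC _ _ _ hx, mul_assoc]
  mul_comm x y := by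
    obtain ⟨f, rfl⟩ := mkU_surj x; obtain ⟨g, rfl⟩ := mkU_surj y
    simp only [mulU]
    exact eqU fun x hx => by simp only [val_mulC _ _ _ hx, mul_comm]
  ldistrib x y z := by
    obtain ⟨f, rfl⟩ := mkU_surj x; obtain ⟨g, rfl⟩ := mkU_surj y; obtain ⟨h, rfl⟩ := mkU_surj z
    simp only [addU, mulU]
    exact eqU fun x hx => by simp only [val_mulC _ _ _ hx, val_addC _ _ _ hx, mul_add]
  add_zero x := by
    obtain ⟨f, rfl⟩ := mkU_surj x
    rw [zeroU, addU]
    exact eqU fun x hx => by simp only [val_constC _ _ hx, val_addC _ _ _ hx, add_zero]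
  mul_zero x := by
    obtain ⟨f, rfl⟩ := mkU_surj x
    rw [zeroU, mulU]
    exact eqU fun x hx => by simp only [val_constC _ _ hx, val_mulC _ _ _ hx, mul_zero]
  mul_one x := by
    obtain ⟨f, rfl⟩ := mkU_surj x
    rw [oneU, mulU]
    exact eqU fun x hx => by simp only [val_constC _ _ hx, val_mulC _ _ _ hx, mul_one]
  lt_trans x y z := by
    obtain ⟨f, rfl⟩ := mkU_surj x; obtain ⟨g, rfl⟩ := mkU_surj y; obtain ⟨h, rfl⟩ := mkU_surj z
    simp only [ltU]
    intro h1 h2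
    exact (h1.and h2).mono (D0.ltV _ _) fun x hx h => h.1.trans h.2
  lt_irrefl x := by
    obtain ⟨f, rfl⟩ := mkU_surj x
    simp only [ltU]
    intro h
    obtain ⟨x, _, hx⟩ := h.exists
    exact lt_irrefl _ hx
  lt_total x y := by
    obtain ⟨f, rfl⟩ := mkU_surj x; obtain ⟨g, rfl⟩ := mkU_surj y
    rcases Lg.em (U := U) (P := fun x => val f x < val g x) (D0.ltV f g) with h1 | h1
    · exact Or.inl (ltU.2 h1)
    · have := leU (h1.mono (D0.leV g f) fun x hx h => le_of_not_gt h)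
      rcases this with h | h
      · exact Or.inr (Or.inr h)
      · exact Or.inr (Or.inl h.symm)
  add_lt_add x y z := by
    obtain ⟨f, rfl⟩ := mkU_surj x; obtain ⟨g, rfl⟩ := mkU_surj y; obtain ⟨h, rfl⟩ := mkU_surj z
    simp only [addU, ltU]
    intro h1
    refine h1.mono (D0.ltV _ _) fun x hx h => ?_
    rw [val_addC _ _ _ hx, val_addC _ _ _ hx]
    exact add_lt_add_r _ _ _ h
  mul_lt_mul x y z := by
    obtain ⟨f, rfl⟩ := mkU_surj x; obtain ⟨g, rfl⟩ := mkU_surj y; obtain ⟨h, rfl⟩ := mkU_surj z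
    simp only [mulU, ltU, zeroU]
    intro h1 h2
    refine (h1.and h2).mono (D0.ltV _ _) fun x hx h => ?_
    rw [val_mulC _ _ _ hx, val_mulC _ _ _ hx]
    rw [val_constC _ _ hx] at h
    exact PA0.mul_lt_mul _ _ _ h.1 h.2
  zero_lt_one := by
    rw [zeroU, oneU, ltU]
    refine Lg.of_forall (D0.ltV _ _) fun x hx => ?_
    rw [val_constC _ _ hx, val_constC _ _ hx]
    exact PA0.zero_lt_one
  succ_le x y := by
    obtain ⟨f, rfl⟩ := mkU_surj x; obtain ⟨g, rfl⟩ := mkU_surj y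
    rw [ltU, oneU, addU]
    intro h
    refine leU (h.mono (D0.leV _ _) fun x hx h => ?_)
    rw [val_addC _ _ _ hx, val_constC _ _ hx]
    exact succ_le_of h
  zero_le x := by
    obtain ⟨f, rfl⟩ := mkU_surj x
    rw [zeroU]
    refine leU (Lg.of_forall (D0.leV _ _) fun x hx => ?_)
    rw [val_constC _ _ hx]
    exact zle _

variable (U)
noncomputable def gU (x : M) : UP U := mkU U (constC a x)
variable {U}

theorem gU_add (x y : M) : gU U (x + y) = gU U x + gU U y := by
  unfold gU; rw [addU]
  exact eqU fun x hx => by simp only [val_addC _ _ _ hx, val_constC _ _ hx]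
theorem gU_mul (x y : M) : gU U (x * y) = gU U x * gU U y := by
  unfold gU; rw [mulU]
  exact eqU fun x hx => by simp only [val_mulC _ _ _ hx, val_constC _ _ hx]
theorem gU_zero : gU U (0 : M) = 0 := rfl
theorem gU_one : gU U (1 : M) = 1 := rfl
theorem gU_lt {x y : M} : x < y ↔ gU U x < gU U y := by
  unfold gU; rw [ltU]
  constructor
  · intro h
    refine Lg.of_forall (D0.ltV _ _) fun z hz => ?_
    rw [val_constC _ _ hz, val_constC _ _ hz]; exact h
  · intro h
    obtain ⟨z, hz, h⟩ := h.exists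
    rwa [val_constC _ _ hz, val_constC _ _ hz] at h
theorem gU_inj : Function.Injective (gU U) := by
  intro x y h
  unfold gU at h; rw [mkU_eq] at h
  obtain ⟨z, hz, h⟩ := h.exists
  rwa [val_constC _ _ hz, val_constC _ _ hz] at h

theorem seqAt_self (f : M) : SeqAt (gU U f) (mkU U (idC a)) (mkU U f) := by
  obtain ⟨A, b, hp⟩ := exists_unpair f
  have hv : ∀ x, val f x < (x + 1) * b + 1 ∧ ∃ q, A = q * ((x+1) * b + 1) + val f x := by
    intro x
    obtain ⟨A', b', hp', hx, hq⟩ := val_spec f x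
    obtain ⟨rfl, rfl⟩ := pair_inj hp hp'
    exact ⟨hx, hq⟩
  obtain ⟨q, hq⟩ := comprehension (M := M) (R := fun x q => A = q * ((x+1) * b + 1) + val f x)
    (D0.eqF (Fn.const _) (Fn.add (Fn.mul (Fn.var _) (Fn.add (Fn.mul (Fn.add (Fn.var _)
      (Fn.const _)) (Fn.const _)) (Fn.const _))) (Fn.val (Fn.const _) (Fn.var _)))) a
      fun x hx => (hv x).2
  refine ⟨gU U A, gU U b, ?_, ?_, mkU U q, ?_⟩
  · unfold IsPairC at hp ⊢
    rw [← gU_one]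
    simp only [← gU_add, ← gU_mul]
    rw [hp]
  · rw [oneU]; unfold gU; simp only [addU, mulU]
    rw [ltU]
    refine Lg.of_forall (D0.ltV _ _) fun x hx => ?_
    simp only [val_addC _ _ _ hx, val_mulC _ _ _ hx, val_constC _ _ hx, val_idC _ hx]
    exact (hv x).1
  · rw [oneU]; unfold gU; simp only [addU, mulU]
    refine eqU fun x hx => ?_
    simp only [val_addC _ _ _ hx, val_mulC _ _ _ hx, val_constC _ _ hx, val_idC _ hx]
    exact hq x hx

theorem seqAt_gU {f : M} {z : UP U} : SeqAt (gU U f) (mkU U (idC a)) z ↔ z = mkU U f :=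
  ⟨fun h => seqAt_unique h (seqAt_self f), fun h => h ▸ seqAt_self f⟩

end

theorem statement_12 (M : Type) [lang.Structure M] (hPA : PAm M) (hI : ISig 1 M)
    (a : M) (ha : (0 : M) < a) (U : MUltra M a) :
    ∃ (N : Type) (_ : lang.Structure N) (g : M → N) (c : N),
      -- `g` realizes `M` as a substructure of `N`:
      Function.Injective g ∧
      g 0 = 0 ∧ g 1 = 1 ∧
      (∀ x y : M, g (x + y) = g x + g y) ∧
      (∀ x y : M, g (x * y) = g x * g y) ∧
      (∀ x y : M, x < y ↔ g x < g y) ∧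
      -- the extension is cofinal:
      (∀ z : N, ∃ x : M, z ≤ g x) ∧
      -- every element of `N` is `f(c)` for some coded `f`:
      (∀ z : N, ∃ f : M, CodesFunOn f a ∧ SeqAt (g f) c z) ∧
      -- `f(c)` is defined and unique in `N` for each coded `f`:
      (∀ f : M, CodesFunOn f a → ∃ z : N, SeqAt (g f) c z ∧ ∀ z', SeqAt (g f) c z' → z' = z) ∧
      -- `[f]_U ↦ f(c)` is well defined and injective:
      (∀ f f' : M, CodesFunOn f a → CodesFunOn f' a →
        ({x : M | x < a ∧ ∃ y, SeqAt f x y ∧ SeqAt f' x y} ∈ U.sets ↔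
          ∀ z z' : N, SeqAt (g f) c z → SeqAt (g f') c z' → z = z')) ∧
      -- it transports the order of `Ult_U(M)` to that of `N`:
      (∀ f f' : M, CodesFunOn f a → CodesFunOn f' a →
        ({x : M | x < a ∧ ∃ y y', SeqAt f x y ∧ SeqAt f' x y' ∧ y < y'} ∈ U.sets ↔
          ∃ z z' : N, SeqAt (g f) c z ∧ SeqAt (g f') c z' ∧ z < z')) ∧
      -- it transports pointwise addition:
      (∀ f f' h : M, CodesFunOn f a → CodesFunOn f' a → CodesFunOn h a →
        {x : M | x < a ∧ ∃ y y', SeqAt f x y ∧ SeqAt f' x y' ∧ SeqAt h x (y + y')} ∈ U.sets →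
          ∀ z z' w : N, SeqAt (g f) c z → SeqAt (g f') c z' → SeqAt (g h) c w →
            z + z' = w) ∧
      -- it transports pointwise multiplication:
      (∀ f f' h : M, CodesFunOn f a → CodesFunOn f' a → CodesFunOn h a →
        {x : M | x < a ∧ ∃ y y', SeqAt f x y ∧ SeqAt f' x y' ∧ SeqAt h x (y * y')} ∈ U.sets →
          ∀ z z' w : N, SeqAt (g f) c z → SeqAt (g f') c z' → SeqAt (g h) c w →
            z * z' = w) ∧
      -- it transports the constants 0 and 1:
      (∀ f : M, CodesFunOn f a → {x : M | x < a ∧ SeqAt f x 0} ∈ U.sets →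
        SeqAt (g f) c (0 : N)) ∧
      (∀ f : M, CodesFunOn f a → {x : M | x < a ∧ SeqAt f x 1} ∈ U.sets →
        SeqAt (g f) c (1 : N)) := by
  haveI : PAC M := ⟨hPA, hI⟩
  refine ⟨UP U, inferInstance, gU U, mkU U (idC a), gU_inj, gU_zero, gU_one, gU_add, gU_mul,
    fun _ _ => gU_lt, ?_, ?_, ?_, ?_, ?_, ?_, ?_, ?_, ?_⟩
  · intro z
    obtain ⟨f, rfl⟩ := mkU_surj z
    refine ⟨f, leU (Lg.of_forall (D0.leV _ _) fun x hx => ?_)⟩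
    rw [val_constC _ _ hx]
    exact val_le _ _
  · intro z
    obtain ⟨f, rfl⟩ := mkU_surj z
    exact ⟨f, codesFunOn f a, seqAt_self f⟩
  · intro f _
    exact ⟨mkU U f, seqAt_self f, fun z' h => seqAt_gU.1 h⟩
  · intro f f' _ _
    have e : {x : M | x < a ∧ ∃ y, SeqAt f x y ∧ SeqAt f' x y}
        = {x | x < a ∧ val f x = val f' x} := by
      ext x; simp [seqAt_iff_val]
    rw [e]
    constructor
    · intro h z z' hz hz'
      rw [seqAt_gU.1 hz, seqAt_gU.1 hz']; exact mkU_eq.2 h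
    · intro h
      exact mkU_eq.1 (h _ _ (seqAt_self f) (seqAt_self f'))
  · intro f f' _ _
    have e : {x : M | x < a ∧ ∃ y y', SeqAt f x y ∧ SeqAt f' x y' ∧ y < y'}
        = {x | x < a ∧ val f x < val f' x} := by
      ext x; simp [seqAt_iff_val]
    rw [e]
    constructor
    · intro h
      exact ⟨_, _, seqAt_self f, seqAt_self f', ltU.2 h⟩
    · rintro ⟨z, z', h, h', hlt⟩
      rw [seqAt_gU.1 h, seqAt_gU.1 h'] at hlt
      exact ltU.1 hlt
  · intro f f' h _ _ _ hU z z' w hz hz' hw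
    rw [seqAt_gU.1 hz, seqAt_gU.1 hz', seqAt_gU.1 hw, addU, mkU_eq]
    refine Lg.mono (P := fun x => ∃ y y', SeqAt f x y ∧ SeqAt f' x y' ∧ SeqAt h x (y + y')) hU
      (D0.eqV _ _) ?_
    rintro x hx ⟨y, y', h1, h2, h3⟩
    rw [val_addC _ _ _ hx, ← seqAt_iff_val.1 h1, ← seqAt_iff_val.1 h2, ← seqAt_iff_val.1 h3]
  · intro f f' h _ _ _ hU z z' w hz hz' hw
    rw [seqAt_gU.1 hz, seqAt_gU.1 hz', seqAt_gU.1 hw, mulU, mkU_eq]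
    refine Lg.mono (P := fun x => ∃ y y', SeqAt f x y ∧ SeqAt f' x y' ∧ SeqAt h x (y * y')) hU
      (D0.eqV _ _) ?_
    rintro x hx ⟨y, y', h1, h2, h3⟩
    rw [val_mulC _ _ _ hx, ← seqAt_iff_val.1 h1, ← seqAt_iff_val.1 h2, ← seqAt_iff_val.1 h3]
  · intro f _ hU
    rw [seqAt_gU, zeroU, mkU_eq]
    refine Lg.mono (P := fun x => SeqAt f x 0) hU (D0.eqV _ _) fun x hx h => ?_
    rw [val_constC _ _ hx, ← seqAt_iff_val.1 h]
  · intro f _ hU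
    rw [seqAt_gU, oneU, mkU_eq]
    refine Lg.mono (P := fun x => SeqAt f x 1) hU (D0.eqV _ _) fun x hx h => ?_
    rw [val_constC _ _ hx, ← seqAt_iff_val.1 h]

end ArithFC
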